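/- arXiv:2510.21334 — 2 statements merged into one kernel-verified Lean document; each statement's English description precedes it below -/
import Mathlib

section
/- For i = 1, 2, let Γ_i be a finitely generated subgroup of SL(d_i,ℝ) which is P_{θ_i}-Anosov for some nonempty θ_i ⊆ {1,…,d_i−1}: there exist a, C > 0 such that log σ_k(γ) − log σ_{k+1}(γ) ≥ a·|γ| − C for all γ ∈ Γ_i and all k ∈ θ_i, where |γ| is word length with respect to a fixed finite generating set. Then there exist d and an injective homomorphism ρ from the free product Γ₁ * Γ₂ into SL(d,ℝ) whose image is P_{1,d−1}-Anosov: there exist a', C' > 0 such that log σ₁(ρ(w)) − log σ₂(ρ(w)) ≥ a'·|w| − C' and log σ_{d−1}(ρ(w)) − log σ_d(ρ(w)) ≥ a'·|w| − C' for all w ∈ Γ₁ * Γ₂, where |w| is word length in Γ₁ * Γ₂. (Douba–Tsouvalas, Danciger–Guéritaud–Kassel: any free product of Anosov groups is isomorphic to an Anosov group.) -/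
open Matrix

/-- The `k`-th singular value (1-indexed, in nonincreasing order) of a real `d × d` matrix:
the square roots of the eigenvalues of `Aᴴ * A = Aᵀ * A`, sorted in nonincreasing order. -/
noncomputable def sval {d : ℕ} (A : Matrix (Fin d) (Fin d) ℝ) (k : ℕ) : ℝ :=
  if h : 1 ≤ k ∧ k ≤ d then
    (fun i => Real.sqrt ((Matrix.isHermitian_conjTranspose_mul_self A).eigenvalues i))
      ((Tuple.sort fun i => Real.sqrt ((Matrix.isHermitian_conjTranspose_mul_self A).eigenvalues i))
        (Fin.rev ⟨k - 1, by omega⟩))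
  else 0

/-- Word length of `γ` with respect to a generating set `S`: the least `n` such that
`γ` is a product of `n` elements of `S ∪ S⁻¹`. -/
noncomputable def wordLength {G : Type*} [Group G] (S : Set G) (γ : G) : ℕ :=
  sInf {n | ∃ w : List G, w.length = n ∧ (∀ g ∈ w, g ∈ S ∨ g⁻¹ ∈ S) ∧ w.prod = γ}


namespace FPA

open Finset

set_option linter.unusedSectionVars false

/-! ## The entry-sum norm and the matrix of two-by-two minors -/

/-- Sum of the absolute values of all entries. -/
noncomputable def nrm {ι κ : Type*} [Fintype ι] [Fintype κ] (A : Matrix ι κ ℝ) : ℝ :=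
  ∑ i, ∑ j, |A i j|

/-- All two-by-two minors of a matrix. -/
def wd {ι : Type*} (A : Matrix ι ι ℝ) : Matrix (ι × ι) (ι × ι) ℝ :=
  fun p q => A p.1 q.1 * A p.2 q.2 - A p.1 q.2 * A p.2 q.1

section norms
variable {ι κ μ : Type*} [Fintype ι] [Fintype κ] [Fintype μ]

lemma nrm_nonneg (A : Matrix ι κ ℝ) : 0 ≤ nrm A :=
  Finset.sum_nonneg fun _ _ => Finset.sum_nonneg fun _ _ => abs_nonneg _

lemma abs_le_nrm (A : Matrix ι κ ℝ) (i : ι) (j : κ) : |A i j| ≤ nrm A := by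
  unfold nrm
  refine le_trans ?_ (Finset.single_le_sum (f := fun i => ∑ j, |A i j|)
    (fun i _ => Finset.sum_nonneg fun _ _ => abs_nonneg _) (Finset.mem_univ i))
  exact Finset.single_le_sum (f := fun j => |A i j|) (fun _ _ => abs_nonneg _) (Finset.mem_univ j)

lemma nrm_le_of_forall (A : Matrix ι κ ℝ) (c : ℝ) (h : ∀ i j, |A i j| ≤ c) :
    nrm A ≤ (Fintype.card ι * Fintype.card κ : ℝ) * c := by
  unfold nrm
  calc ∑ i, ∑ j, |A i j| ≤ ∑ i : ι, ∑ j : κ, c :=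
        Finset.sum_le_sum fun i _ => Finset.sum_le_sum fun j _ => h i j
    _ = _ := by simp [Finset.card_univ]; ring

lemma nrm_add_le (A B : Matrix ι κ ℝ) : nrm (A + B) ≤ nrm A + nrm B := by
  unfold nrm
  rw [← Finset.sum_add_distrib]
  refine Finset.sum_le_sum fun i _ => ?_
  rw [← Finset.sum_add_distrib]
  exact Finset.sum_le_sum fun j _ => abs_add_le _ _

lemma nrm_smul (c : ℝ) (A : Matrix ι κ ℝ) : nrm (c • A) = |c| * nrm A := by
  unfold nrm
  simp [abs_mul, Finset.mul_sum]

lemma nrm_mul_le (A : Matrix ι κ ℝ) (B : Matrix κ μ ℝ) : nrm (A * B) ≤ nrm A * nrm B := by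
  unfold nrm
  have hk : ∀ k, ∑ j, |B k j| ≤ ∑ k, ∑ j, |B k j| := fun k =>
    Finset.single_le_sum (f := fun k => ∑ j, |B k j|)
      (fun _ _ => Finset.sum_nonneg fun _ _ => abs_nonneg _) (Finset.mem_univ k)
  calc ∑ i, ∑ j, |(A * B) i j| ≤ ∑ i, ∑ j, ∑ k, |A i k| * |B k j| := by
        refine Finset.sum_le_sum fun i _ => Finset.sum_le_sum fun j _ => ?_
        rw [Matrix.mul_apply]
        refine (Finset.abs_sum_le_sum_abs _ _).trans (le_of_eq ?_)
        simp [abs_mul]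
    _ = ∑ i, ∑ k, |A i k| * ∑ j, |B k j| := by
        refine Finset.sum_congr rfl fun i _ => ?_
        rw [Finset.sum_comm]
        simp [Finset.mul_sum]
    _ ≤ ∑ i, ∑ k, |A i k| * ∑ k, ∑ j, |B k j| :=
        Finset.sum_le_sum fun i _ => Finset.sum_le_sum fun k _ =>
          mul_le_mul_of_nonneg_left (hk k) (abs_nonneg _)
    _ = _ := by simp [Finset.sum_mul]

lemma nrm_mul3_le (A : Matrix ι ι ℝ) (B : Matrix ι ι ℝ) (C : Matrix ι ι ℝ) :
    nrm (A * B * C) ≤ nrm A * nrm B * nrm C :=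
  (nrm_mul_le _ _).trans (mul_le_mul_of_nonneg_right (nrm_mul_le _ _) (nrm_nonneg _))

lemma wd_mul (A B : Matrix ι ι ℝ) : wd (A * B) = (1 / 2 : ℝ) • (wd A * wd B) := by
  ext ⟨i, j⟩ ⟨k, l⟩
  have e1 : ∀ k l, (A * B) i k * (A * B) j l = ∑ p : ι × ι, A i p.1 * A j p.2 * (B p.1 k * B p.2 l) := by
    intro k l
    rw [Matrix.mul_apply, Matrix.mul_apply, Finset.sum_mul_sum, Fintype.sum_prod_type]
    exact Finset.sum_congr rfl fun p _ => Finset.sum_congr rfl fun q _ => by ring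
  have e2 : wd (A * B) (i, j) (k, l) = ∑ p : ι × ι, A i p.1 * A j p.2 * wd B p (k, l) := by
    simp only [wd]
    rw [e1, e1 l k, ← Finset.sum_sub_distrib]
    exact Finset.sum_congr rfl fun p _ => by ring
  have e3 : wd (A * B) (i, j) (k, l) = - ∑ p : ι × ι, A i p.2 * A j p.1 * wd B p (k, l) := by
    rw [e2, ← (Equiv.prodComm ι ι).sum_comp, ← Finset.sum_neg_distrib]
    refine Finset.sum_congr rfl fun p _ => ?_
    simp only [wd, Equiv.prodComm_apply, Prod.fst_swap, Prod.snd_swap]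
    ring
  have e4 : (wd A * wd B) (i, j) (k, l) =
      (∑ p : ι × ι, A i p.1 * A j p.2 * wd B p (k, l)) -
        ∑ p : ι × ι, A i p.2 * A j p.1 * wd B p (k, l) := by
    rw [Matrix.mul_apply, ← Finset.sum_sub_distrib]
    refine Finset.sum_congr rfl fun p _ => ?_
    simp only [wd]; ring
  rw [Matrix.smul_apply, e4, ← e2, smul_eq_mul]
  linarith

lemma nrm_wd_mul_le (A B : Matrix ι ι ℝ) : nrm (wd (A * B)) ≤ nrm (wd A) * nrm (wd B) := by
  rw [wd_mul, nrm_smul]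
  have h1 := nrm_mul_le (wd A) (wd B)
  have h2 := nrm_nonneg (wd A * wd B)
  rw [abs_of_pos (by norm_num)]
  linarith

lemma nrm_wd_mul3_le (A B C : Matrix ι ι ℝ) :
    nrm (wd (A * B * C)) ≤ nrm (wd A) * nrm (wd B) * nrm (wd C) :=
  (nrm_wd_mul_le _ _).trans (mul_le_mul_of_nonneg_right (nrm_wd_mul_le _ _) (nrm_nonneg _))

lemma sum_abs_mul_abs (A B : Matrix ι ι ℝ) :
    ∑ p : ι × ι, ∑ q : ι × ι, |A p.1 q.1| * |B p.2 q.2| = nrm A * nrm B := by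
  simp only [nrm, Fintype.sum_prod_type, ← Finset.mul_sum, ← Finset.sum_mul]

lemma sum_abs_mul_abs' (A B : Matrix ι ι ℝ) :
    ∑ p : ι × ι, ∑ q : ι × ι, |A p.1 q.2| * |B p.2 q.1| = nrm A * nrm B := by
  rw [← sum_abs_mul_abs]
  refine Finset.sum_congr rfl fun p _ => ?_
  rw [← (Equiv.prodComm ι ι).sum_comp]
  simp

lemma nrm_wd_add_le (A B : Matrix ι ι ℝ) :
    nrm (wd (A + B)) ≤ nrm (wd A) + 4 * (nrm A * nrm B) + 2 * nrm B ^ 2 := by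
  have key : nrm (wd (A + B)) ≤ ∑ p : ι × ι, ∑ q : ι × ι, (|wd A p q| +
      (|A p.1 q.1| * |B p.2 q.2| + |B p.1 q.1| * |A p.2 q.2| +
      (|A p.1 q.2| * |B p.2 q.1| + |B p.1 q.2| * |A p.2 q.1|)) +
      (|B p.1 q.1| * |B p.2 q.2| + |B p.1 q.2| * |B p.2 q.1|)) := by
    unfold nrm
    refine Finset.sum_le_sum fun p _ => Finset.sum_le_sum fun q _ => ?_
    simp only [← abs_mul]
    have : wd (A + B) p q = wd A p q + (A p.1 q.1 * B p.2 q.2) + (B p.1 q.1 * A p.2 q.2)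
      - (A p.1 q.2 * B p.2 q.1) - (B p.1 q.2 * A p.2 q.1) + (B p.1 q.1 * B p.2 q.2)
      - (B p.1 q.2 * B p.2 q.1) := by
      simp only [wd, Matrix.add_apply]; ring
    rw [this, abs_le]
    constructor
    · linarith [neg_abs_le (wd A p q), neg_abs_le (A p.1 q.1 * B p.2 q.2),
        neg_abs_le (B p.1 q.1 * A p.2 q.2), le_abs_self (A p.1 q.2 * B p.2 q.1),
        le_abs_self (B p.1 q.2 * A p.2 q.1), neg_abs_le (B p.1 q.1 * B p.2 q.2),
        le_abs_self (B p.1 q.2 * B p.2 q.1)]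
    · linarith [le_abs_self (wd A p q), le_abs_self (A p.1 q.1 * B p.2 q.2),
        le_abs_self (B p.1 q.1 * A p.2 q.2), neg_abs_le (A p.1 q.2 * B p.2 q.1),
        neg_abs_le (B p.1 q.2 * A p.2 q.1), le_abs_self (B p.1 q.1 * B p.2 q.2),
        neg_abs_le (B p.1 q.2 * B p.2 q.1)]
  refine key.trans (le_of_eq ?_)
  simp only [Finset.sum_add_distrib, sum_abs_mul_abs, sum_abs_mul_abs']
  rw [show nrm (wd A) = ∑ p, ∑ q, |wd A p q| from rfl]
  ring

lemma wd_zero : wd (0 : Matrix ι ι ℝ) = 0 := by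
  ext p q; simp [wd]

lemma nrm_zero : nrm (0 : Matrix ι κ ℝ) = 0 := by simp [nrm]

lemma nrm_wd_le (A : Matrix ι ι ℝ) : nrm (wd A) ≤ 2 * nrm A ^ 2 := by
  have := nrm_wd_add_le 0 A
  rw [wd_zero, nrm_zero, nrm_zero, zero_add] at this
  linarith

lemma wd_smul (c : ℝ) (A : Matrix ι ι ℝ) : wd (c • A) = c ^ 2 • wd A := by
  ext p q; simp [wd]; ring

lemma nrm_wd_smul (c : ℝ) (A : Matrix ι ι ℝ) : nrm (wd (c • A)) = c ^ 2 * nrm (wd A) := by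
  rw [wd_smul, nrm_smul, abs_of_nonneg (sq_nonneg c)]

lemma nrm_submatrix (A : Matrix ι ι ℝ) (e : κ ≃ ι) : nrm (A.submatrix e e) = nrm A := by
  simp only [nrm, Matrix.submatrix_apply]
  rw [e.sum_comp (fun i => ∑ j, |A i (e j)|)]
  exact Finset.sum_congr rfl fun i _ => e.sum_comp (fun j => |A i j|)

lemma nrm_wd_submatrix (A : Matrix ι ι ℝ) (e : κ ≃ ι) :
    nrm (wd (A.submatrix e e)) = nrm (wd A) := by
  rw [← nrm_submatrix (wd A) (e.prodCongr e)]
  rfl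

lemma nrm_fromBlocks (A : Matrix ι ι ℝ) (B : Matrix κ κ ℝ) :
    nrm (Matrix.fromBlocks A 0 0 B) = nrm A + nrm B := by
  simp [nrm, Fintype.sum_sum_type]

lemma nrm_wd_fromBlocks_zero (A : Matrix ι ι ℝ) :
    nrm (wd (Matrix.fromBlocks A 0 0 (0 : Matrix κ κ ℝ))) = nrm (wd A) := by
  simp only [nrm, Fintype.sum_prod_type, Fintype.sum_sum_type, wd]
  simp

lemma nrm_wd_fromBlocks (A : Matrix ι ι ℝ) (B : Matrix κ κ ℝ) :
    nrm (wd (Matrix.fromBlocks A 0 0 B)) ≤ nrm (wd A) + 4 * (nrm A * nrm B) + 2 * nrm B ^ 2 := by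
  have h : Matrix.fromBlocks A 0 0 B = Matrix.fromBlocks A 0 0 (0 : Matrix κ κ ℝ) +
      Matrix.fromBlocks (0 : Matrix ι ι ℝ) 0 0 B := by
    simp [Matrix.fromBlocks_add]
  rw [h]
  refine (nrm_wd_add_le _ _).trans (le_of_eq ?_)
  rw [nrm_wd_fromBlocks_zero, nrm_fromBlocks, nrm_fromBlocks, nrm_zero, nrm_zero]
  ring

lemma nrm_kronecker (A : Matrix ι ι ℝ) (B : Matrix κ κ ℝ) :
    nrm (Matrix.kroneckerMap (· * ·) A B) = nrm A * nrm B := by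
  simp only [nrm, Fintype.sum_prod_type, Matrix.kroneckerMap_apply, abs_mul,
    ← Finset.mul_sum, ← Finset.sum_mul]

lemma abs_le_nrm_sq (A : Matrix ι ι ℝ) (i j k l : ι) : |A i j * A k l| ≤ nrm A ^ 2 := by
  rw [abs_mul, sq]
  exact mul_le_mul (abs_le_nrm _ _ _) (abs_le_nrm _ _ _) (abs_nonneg _) (nrm_nonneg _)

lemma nrm_wd_kronecker_le (A : Matrix ι ι ℝ) :
    nrm (wd (Matrix.kroneckerMap (· * ·) A A)) ≤
      2 * (Fintype.card ι : ℝ) ^ 8 * (nrm A ^ 2 * nrm (wd A)) := by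
  refine (nrm_le_of_forall _ (2 * (nrm A ^ 2 * nrm (wd A))) ?_).trans (le_of_eq ?_)
  · rintro ⟨⟨i, i'⟩, ⟨j, j'⟩⟩ ⟨⟨k, k'⟩, ⟨l, l'⟩⟩
    have h1 := abs_le_nrm (wd A) (i, j) (k, l)
    have h2 := abs_le_nrm (wd A) (i', j') (k', l')
    simp only [wd, Matrix.kroneckerMap_apply] at *
    have e : A i k * A i' k' * (A j l * A j' l') - A i l * A i' l' * (A j k * A j' k') =
      (A i k * A j l - A i l * A j k) * (A i' k' * A j' l') +
      (A i l * A j k) * (A i' k' * A j' l' - A i' l' * A j' k') := by ring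
    rw [e]
    refine (abs_add_le _ _).trans ?_
    rw [abs_mul, abs_mul (A i l * A j k)]
    have h3 := mul_le_mul h1 (abs_le_nrm_sq A i' k' j' l') (abs_nonneg _) (nrm_nonneg _)
    have h4 := mul_le_mul (abs_le_nrm_sq A i l j k) h2 (abs_nonneg _) (sq_nonneg _)
    linarith
  · simp only [Fintype.card_prod]; push_cast; ring

lemma nrm_wd_conj_le [DecidableEq ι] (P Q A : Matrix ι ι ℝ) :
    nrm (wd (P * A * Q)) ≤ nrm (wd P) * nrm (wd Q) * nrm (wd A) :=
  (nrm_wd_mul3_le _ _ _).trans (le_of_eq (by ring))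

lemma nrm_one_nonneg [DecidableEq ι] : (0 : ℝ) ≤ nrm (1 : Matrix ι ι ℝ) := nrm_nonneg _

end norms

end FPA


namespace FPA

/-! ## Singular value decomposition -/

lemma svd {d : ℕ} (A : Matrix (Fin d) (Fin d) ℝ) (hA : A.det ≠ 0) :
    ∃ O Q : Matrix (Fin d) (Fin d) ℝ, Oᵀ * O = 1 ∧ O * Oᵀ = 1 ∧ Qᵀ * Q = 1 ∧ Q * Qᵀ = 1 ∧
      A = O * diagonal (fun i : Fin d => sval A (i + 1)) * Q ∧
      (∀ i : Fin d, 0 < sval A (i + 1)) ∧ Antitone (fun i : Fin d => sval A (i + 1)) := by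
  set hH := Matrix.isHermitian_conjTranspose_mul_self A with hHdef
  set lam := hH.eigenvalues with hlam
  have hpsd : (Aᴴ * A).PosSemidef := Matrix.posSemidef_conjTranspose_mul_self A
  have hdet : (Aᴴ * A).det ≠ 0 := by
    rw [det_mul, det_conjTranspose]
    simpa using hA
  have hpos : ∀ i, 0 < lam i := by
    intro i
    refine lt_of_le_of_ne (hpsd.eigenvalues_nonneg i) (fun h => hdet ?_)
    rw [hH.det_eq_prod_eigenvalues]
    exact Finset.prod_eq_zero (Finset.mem_univ i) (by
      rw [show hH.eigenvalues i = 0 from h.symm]; exact RCLike.ofReal_zero)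
  set f : Fin d → ℝ := fun i => Real.sqrt (lam i) with hf
  set e : Equiv.Perm (Fin d) := Fin.revPerm.trans (Tuple.sort f) with he
  have hs : ∀ i : Fin d, sval A (i + 1) = f (e i) := by
    intro i
    have h : 1 ≤ (i : ℕ) + 1 ∧ (i : ℕ) + 1 ≤ d := ⟨by omega, by omega⟩
    unfold sval
    rw [dif_pos h]
    rfl
  have hfpos : ∀ i, 0 < f i := fun i => Real.sqrt_pos.mpr (hpos i)
  have hfun : (fun i : Fin d => sval A (i + 1)) = fun i => f (e i) := funext hs
  set U : Matrix (Fin d) (Fin d) ℝ := (hH.eigenvectorUnitary : Matrix (Fin d) (Fin d) ℝ) with hU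
  have hU1 : Uᵀ * U = 1 := by
    have := Unitary.coe_star_mul_self hH.eigenvectorUnitary
    rwa [Matrix.star_eq_conjTranspose, conjTranspose_eq_transpose_of_trivial] at this
  have hdiag : Uᵀ * (Aᵀ * A) * U = diagonal lam := by
    have := hH.conjStarAlgAut_star_eigenvectorUnitary
    rw [Unitary.conjStarAlgAut_star_apply] at this
    exact this
  set Q' : Matrix (Fin d) (Fin d) ℝ := U.submatrix id e with hQ'
  have hQ1 : Q'ᵀ * Q' = 1 := by
    have : Q'ᵀ * Q' = (Uᵀ * U).submatrix e e := by
      ext i j; simp [Q', Matrix.mul_apply]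
    rw [this, hU1, Matrix.submatrix_one_equiv]
  have hQ2 : Q' * Q'ᵀ = 1 := mul_eq_one_comm.mp hQ1
  have hdiag' : Q'ᵀ * (Aᵀ * A) * Q' = diagonal (fun i => lam (e i)) := by
    have : Q'ᵀ * (Aᵀ * A) * Q' = (Uᵀ * (Aᵀ * A) * U).submatrix e e := by
      ext i j; simp [Q', Matrix.mul_apply]
    rw [this, hdiag]
    ext i j
    simp [diagonal_apply]
  set D' : Matrix (Fin d) (Fin d) ℝ := diagonal (fun i => (f (e i))⁻¹) with hD'
  have hDD : D' * diagonal (fun i => f (e i)) = 1 := by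
    rw [hD', diagonal_mul_diagonal, ← diagonal_one]
    congr 1; funext i
    exact inv_mul_cancel₀ (hfpos _).ne'
  have hO1 : (A * Q' * D')ᵀ * (A * Q' * D') = 1 := by
    have : (A * Q' * D')ᵀ * (A * Q' * D') = D' * (Q'ᵀ * (Aᵀ * A) * Q') * D' := by
      simp only [transpose_mul, hD', diagonal_transpose, Matrix.mul_assoc]
    rw [this, hdiag', hD', diagonal_mul_diagonal, diagonal_mul_diagonal, ← diagonal_one]
    congr 1; funext i
    have h1 : lam (e i) = f (e i) * f (e i) := (Real.mul_self_sqrt (hpos _).le).symm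
    have := (hfpos (e i)).ne'
    rw [h1]; field_simp
  refine ⟨A * Q' * D', Q'ᵀ, hO1, mul_eq_one_comm.mp hO1, ?_, ?_, ?_, ?_, ?_⟩
  · rw [transpose_transpose]; exact hQ2
  · rw [transpose_transpose]; exact hQ1
  · rw [hfun, Matrix.mul_assoc (A * Q'), hDD, Matrix.mul_one, Matrix.mul_assoc, hQ2, Matrix.mul_one]
  · intro i; rw [hs]; exact hfpos _
  · rw [hfun]
    intro i j hij
    exact Tuple.monotone_sort f (Fin.rev_le_rev.mpr hij)

lemma orth_entry_le {d : ℕ} (O : Matrix (Fin d) (Fin d) ℝ) (h : Oᵀ * O = 1) (i j : Fin d) :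
    |O i j| ≤ 1 := by
  have h1 : (Oᵀ * O) j j = 1 := by rw [h]; simp
  rw [Matrix.mul_apply] at h1
  have h2 : O i j * O i j ≤ ∑ x, Oᵀ j x * O x j :=
    Finset.single_le_sum (f := fun x => Oᵀ j x * O x j) (fun x _ => mul_self_nonneg (O x j))
      (Finset.mem_univ i)
  rw [h1] at h2
  rw [abs_le]; constructor <;> nlinarith

lemma nrm_orth {d : ℕ} (O : Matrix (Fin d) (Fin d) ℝ) (h : Oᵀ * O = 1) : nrm O ≤ (d : ℝ) ^ 2 := by
  refine (nrm_le_of_forall _ 1 (orth_entry_le O h)).trans (le_of_eq ?_)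
  simp; ring

lemma nrm_wd_orth {d : ℕ} (O : Matrix (Fin d) (Fin d) ℝ) (h : Oᵀ * O = 1) :
    nrm (wd O) ≤ 2 * (d : ℝ) ^ 4 := by
  have h1 := nrm_wd_le O
  have h2 := pow_le_pow_left₀ (nrm_nonneg _) (nrm_orth O h) 2
  nlinarith

lemma nrm_diag {d : ℕ} (s : Fin d → ℝ) (c : ℝ) (hc : 0 ≤ c) (h : ∀ i, |s i| ≤ c) :
    nrm (diagonal s) ≤ (d : ℝ) ^ 2 * c := by
  refine (nrm_le_of_forall _ c ?_).trans (le_of_eq ?_)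
  · intro i j
    by_cases hij : i = j
    · subst hij; simpa using h i
    · rw [diagonal_apply_ne _ hij]; simpa using hc
  · simp only [Fintype.card_fin]; ring

/-- Lower bound on the first gap of singular values. -/
lemma log_gap_first {d : ℕ} (A : Matrix (Fin d) (Fin d) ℝ) (hA : A.det ≠ 0) (hd : 2 ≤ d)
    (K l : ℝ) (hK : 0 < K) (h : nrm (wd A) ≤ K * Real.exp (-l) * nrm A ^ 2) :
    l - Real.log (4 * (d : ℝ) ^ 20 * K) ≤ Real.log (sval A 1) - Real.log (sval A 2) := by
  obtain ⟨O, Q, hO1, hO2, hQ1, hQ2, hsvd, hpos, hanti⟩ := svd A hA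
  have hd0 : (0 : ℝ) < d := by exact_mod_cast (by omega : 0 < d)
  set s : Fin d → ℝ := fun i => sval A (i + 1) with hs
  set i0 : Fin d := ⟨0, by omega⟩
  set i1 : Fin d := ⟨1, by omega⟩
  have hs0 : sval A 1 = s i0 := rfl
  have hs1 : sval A 2 = s i1 := rfl
  have p0 := hpos i0
  have p1 := hpos i1
  change 0 < s i0 at p0
  change 0 < s i1 at p1
  have hD : diagonal s = Oᵀ * A * Qᵀ := by
    rw [hsvd, ← Matrix.mul_assoc, ← Matrix.mul_assoc, hO1, Matrix.one_mul, Matrix.mul_assoc, hQ2,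
      Matrix.mul_one]
  have hAn : nrm A ≤ (d : ℝ) ^ 6 * s i0 := by
    rw [hsvd]
    refine (nrm_mul3_le _ _ _).trans ?_
    have h1 := nrm_orth O hO1
    have h2 := nrm_orth Q hQ1
    have h3 := nrm_diag s (s i0) p0.le (fun i => by
      have : 0 < s i := hpos i
      rw [abs_of_pos this]; exact hanti (Fin.mk_le_of_le_val (Nat.zero_le _)))
    calc nrm O * nrm (diagonal s) * nrm Q ≤ (d : ℝ) ^ 2 * ((d : ℝ) ^ 2 * s i0) * (d : ℝ) ^ 2 := by
          gcongr <;> first | exact nrm_nonneg _ | assumption | (have := nrm_nonneg (wd A); positivity)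
      _ = _ := by ring
  have hW : s i0 * s i1 ≤ 4 * (d : ℝ) ^ 8 * nrm (wd A) := by
    have h1 : s i0 * s i1 ≤ nrm (wd (diagonal s)) := by
      refine le_trans (le_of_eq ?_) (abs_le_nrm (wd (diagonal s)) (i0, i1) (i0, i1))
      have hne : i0 ≠ i1 := by simp [i0, i1]
      simp only [wd, diagonal_apply_eq, diagonal_apply_ne _ hne, zero_mul, sub_zero]
      rw [abs_of_pos (mul_pos p0 p1)]
    refine h1.trans ?_
    rw [hD]
    refine (nrm_wd_mul3_le _ _ _).trans ?_
    have h2 := nrm_wd_orth Oᵀ (by rw [transpose_transpose]; exact hO2)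
    have h3 := nrm_wd_orth Qᵀ (by rw [transpose_transpose]; exact hQ2)
    calc nrm (wd Oᵀ) * nrm (wd A) * nrm (wd Qᵀ)
        ≤ (2 * (d : ℝ) ^ 4) * nrm (wd A) * (2 * (d : ℝ) ^ 4) := by
          gcongr <;> first | exact nrm_nonneg _ | assumption | (have := nrm_nonneg (wd A); positivity)
      _ = _ := by ring
  have hfin : s i1 ≤ 4 * (d : ℝ) ^ 20 * K * Real.exp (-l) * s i0 := by
    have h1 : s i0 * s i1 ≤ s i0 * (4 * (d : ℝ) ^ 20 * K * Real.exp (-l) * s i0) := by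
      calc s i0 * s i1 ≤ 4 * (d : ℝ) ^ 8 * nrm (wd A) := hW
        _ ≤ 4 * (d : ℝ) ^ 8 * (K * Real.exp (-l) * nrm A ^ 2) := by gcongr
        _ ≤ 4 * (d : ℝ) ^ 8 * (K * Real.exp (-l) * ((d : ℝ) ^ 6 * s i0) ^ 2) := by
            gcongr
            exact nrm_nonneg _
        _ = _ := by ring
    exact le_of_mul_le_mul_left h1 p0
  have hlog := Real.log_le_log p1 hfin
  rw [Real.log_mul (by positivity) p0.ne', Real.log_mul (by positivity) (by positivity),
    Real.log_exp] at hlog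
  rw [hs0, hs1]; linarith

/-- Lower bound on the last gap of singular values, in terms of the inverse. -/
lemma log_gap_last {d : ℕ} (A B : Matrix (Fin d) (Fin d) ℝ) (hA : A.det ≠ 0) (hB : B * A = 1)
    (hd : 2 ≤ d)
    (K l : ℝ) (hK : 0 < K) (h : nrm (wd B) ≤ K * Real.exp (-l) * nrm B ^ 2) :
    l - Real.log (4 * (d : ℝ) ^ 20 * K) ≤ Real.log (sval A (d - 1)) - Real.log (sval A d) := by
  obtain ⟨O, Q, hO1, hO2, hQ1, hQ2, hsvd, hpos, hanti⟩ := svd A hA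
  have hd0 : (0 : ℝ) < d := by exact_mod_cast (by omega : 0 < d)
  set s' : Fin d → ℝ := fun i => sval A (i + 1) with hs'
  set s : Fin d → ℝ := fun i => (s' i)⁻¹ with hs
  set i0 : Fin d := ⟨d - 1, by omega⟩ with hi0
  set i1 : Fin d := ⟨d - 2, by omega⟩ with hi1
  have hs0 : sval A d = s' i0 := by
    simp only [hs', hi0]; congr 1; omega
  have hs1 : sval A (d - 1) = s' i1 := by
    simp only [hs', hi1]; congr 1; omega
  have p0' : 0 < s' i0 := hpos i0
  have p1' : 0 < s' i1 := hpos i1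
  have p0 : 0 < s i0 := inv_pos.mpr p0'
  have p1 : 0 < s i1 := inv_pos.mpr p1'
  have hDD : diagonal s' * diagonal s = 1 := by
    rw [diagonal_mul_diagonal, ← diagonal_one]
    congr 1; funext i
    exact mul_inv_cancel₀ (hpos i).ne'
  have hB' : B = Qᵀ * diagonal s * Oᵀ := by
    have : A * (Qᵀ * diagonal s * Oᵀ) = 1 := by
      rw [hsvd]
      calc O * diagonal s' * Q * (Qᵀ * diagonal s * Oᵀ)
          = O * (diagonal s' * ((Q * Qᵀ) * diagonal s)) * Oᵀ := by simp only [Matrix.mul_assoc]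
        _ = 1 := by rw [hQ2, Matrix.one_mul, hDD, Matrix.mul_one, hO2]
    calc B = B * (A * (Qᵀ * diagonal s * Oᵀ)) := by rw [this, Matrix.mul_one]
      _ = _ := by rw [← Matrix.mul_assoc, hB, Matrix.one_mul]
  have hD : diagonal s = Q * B * O := by
    rw [hB']
    calc diagonal s = (Q * Qᵀ) * diagonal s * (Oᵀ * O) := by
          rw [hQ2, hO1, Matrix.one_mul, Matrix.mul_one]
      _ = _ := by simp only [Matrix.mul_assoc]
  have hAn : nrm B ≤ (d : ℝ) ^ 6 * s i0 := by
    rw [hB']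
    refine (nrm_mul3_le _ _ _).trans ?_
    have h1 := nrm_orth Oᵀ (by rw [transpose_transpose]; exact hO2)
    have h2 := nrm_orth Qᵀ (by rw [transpose_transpose]; exact hQ2)
    have h3 := nrm_diag s (s i0) p0.le (fun i => by
      have hi : 0 < s' i := hpos i
      have : 0 < s i := inv_pos.mpr hi
      rw [abs_of_pos this]
      refine inv_anti₀ p0' (hanti (Fin.mk_le_mk.mpr ?_))
      change (i : ℕ) ≤ d - 1
      omega)
    calc nrm Qᵀ * nrm (diagonal s) * nrm Oᵀ ≤ (d : ℝ) ^ 2 * ((d : ℝ) ^ 2 * s i0) * (d : ℝ) ^ 2 := by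
          gcongr <;> first | exact nrm_nonneg _ | assumption | (have := nrm_nonneg (wd B); positivity)
      _ = _ := by ring
  have hW : s i0 * s i1 ≤ 4 * (d : ℝ) ^ 8 * nrm (wd B) := by
    have h1 : s i0 * s i1 ≤ nrm (wd (diagonal s)) := by
      refine le_trans (le_of_eq ?_) (abs_le_nrm (wd (diagonal s)) (i0, i1) (i0, i1))
      have hne : i0 ≠ i1 := by simp [i0, i1]; omega
      simp only [wd, diagonal_apply_eq, diagonal_apply_ne _ hne, zero_mul, sub_zero]
      rw [abs_of_pos (mul_pos p0 p1)]
    refine h1.trans ?_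
    rw [hD]
    refine (nrm_wd_mul3_le _ _ _).trans ?_
    have h2 := nrm_wd_orth O hO1
    have h3 := nrm_wd_orth Q hQ1
    calc nrm (wd Q) * nrm (wd B) * nrm (wd O)
        ≤ (2 * (d : ℝ) ^ 4) * nrm (wd B) * (2 * (d : ℝ) ^ 4) := by
          gcongr <;> first | exact nrm_nonneg _ | assumption | (have := nrm_nonneg (wd B); positivity)
      _ = _ := by ring
  have hfin : s i1 ≤ 4 * (d : ℝ) ^ 20 * K * Real.exp (-l) * s i0 := by
    have h1 : s i0 * s i1 ≤ s i0 * (4 * (d : ℝ) ^ 20 * K * Real.exp (-l) * s i0) := by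
      calc s i0 * s i1 ≤ 4 * (d : ℝ) ^ 8 * nrm (wd B) := hW
        _ ≤ 4 * (d : ℝ) ^ 8 * (K * Real.exp (-l) * nrm B ^ 2) := by gcongr
        _ ≤ 4 * (d : ℝ) ^ 8 * (K * Real.exp (-l) * ((d : ℝ) ^ 6 * s i0) ^ 2) := by
            gcongr
            exact nrm_nonneg _
        _ = _ := by ring
    exact le_of_mul_le_mul_left h1 p0
  have hlog := Real.log_le_log p1 hfin
  rw [Real.log_mul (by positivity) p0.ne', Real.log_mul (by positivity) (by positivity),
    Real.log_exp] at hlog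
  simp only [hs, Real.log_inv] at hlog
  rw [hs0, hs1]; linarith

end FPA


namespace FPA

/-! ## Compound matrices -/

/-- The matrix of all `k`-minors, indexed by all `k`-tuples of indices. -/
noncomputable def cmp {d : ℕ} (k : ℕ) (A : Matrix (Fin d) (Fin d) ℝ) :
    Matrix (Fin k → Fin d) (Fin k → Fin d) ℝ :=
  fun I J => (A.submatrix I J).det

lemma cmp_mul {d : ℕ} (k : ℕ) (A B : Matrix (Fin d) (Fin d) ℝ) :
    cmp k A * cmp k B = (k.factorial : ℝ) • cmp k (A * B) := by
  ext I K
  have h1 : ∀ π : Equiv.Perm (Fin k),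
      ∑ J : Fin k → Fin d, (∏ r, A (I (π r)) (J r)) * (B.submatrix J K).det =
        ((Equiv.Perm.sign π : ℤ) : ℝ) * ((A * B).submatrix I K).det := by
    intro π
    have e := (Matrix.detRowAlternating (n := Fin k) (R := ℝ)).toMultilinearMap.map_sum
      (fun (r : Fin k) (j : Fin d) => (A (I (π r)) j) • (fun s => B j (K s)))
    have e2 := Matrix.det_permute π ((A * B).submatrix I K)
    rw [← e2]
    refine Eq.trans ?_ (Eq.trans e.symm ?_)
    · refine Finset.sum_congr rfl fun J _ => ?_
      rw [MultilinearMap.map_smul_univ, smul_eq_mul]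
      rfl
    · change Matrix.det _ = _
      congr 1
      ext r s
      simp [Matrix.mul_apply]
  rw [Matrix.mul_apply, Matrix.smul_apply]
  simp only [cmp]
  have h2 : ∀ J : Fin k → Fin d, (A.submatrix I J).det * (B.submatrix J K).det =
      ∑ π : Equiv.Perm (Fin k), ((Equiv.Perm.sign π : ℤ) : ℝ) *
        ((∏ r, A (I (π r)) (J r)) * (B.submatrix J K).det) := by
    intro J
    rw [Matrix.det_apply', Finset.sum_mul]
    refine Finset.sum_congr rfl fun π _ => ?_
    simp [mul_assoc]
  simp_rw [h2]
  rw [Finset.sum_comm]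
  simp_rw [← Finset.mul_sum, h1]
  have h3 : ∀ π : Equiv.Perm (Fin k), ((Equiv.Perm.sign π : ℤ) : ℝ) *
      (((Equiv.Perm.sign π : ℤ) : ℝ) * ((A * B).submatrix I K).det) =
      ((A * B).submatrix I K).det := by
    intro π
    rw [← mul_assoc, ← Int.cast_mul]
    simp
  simp_rw [h3]
  simp [Fintype.card_perm]

/-- The `k`-th exterior power plus a trivial summand, as a representation on `k`-tensors. -/
noncomputable def cpd {d : ℕ} (k : ℕ) : Matrix (Fin d) (Fin d) ℝ →*
    Matrix (Fin k → Fin d) (Fin k → Fin d) ℝ where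
  toFun A := (k.factorial : ℝ)⁻¹ • cmp k A + (1 - (k.factorial : ℝ)⁻¹ • cmp k 1)
  map_one' := by simp
  map_mul' A B := by
    have hk : (k.factorial : ℝ) ≠ 0 := by exact_mod_cast k.factorial_ne_zero
    have key : ∀ X Y : Matrix (Fin d) (Fin d) ℝ, ((k.factorial : ℝ)⁻¹ • cmp k X) *
        ((k.factorial : ℝ)⁻¹ • cmp k Y) = (k.factorial : ℝ)⁻¹ • cmp k (X * Y) := by
      intro X Y
      rw [Matrix.smul_mul, Matrix.mul_smul, cmp_mul, smul_smul, smul_smul]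
      congr 1
      field_simp
    have h1 := key A B
    have h2 := key A 1
    have h3 := key 1 B
    have h4 := key 1 1
    rw [Matrix.mul_one] at h2 h4
    rw [Matrix.one_mul] at h3
    generalize (k.factorial : ℝ)⁻¹ • cmp k A = a at *
    generalize (k.factorial : ℝ)⁻¹ • cmp k B = b at *
    generalize (k.factorial : ℝ)⁻¹ • cmp k (1 : Matrix (Fin d) (Fin d) ℝ) = p at *
    rw [← h1]
    simp only [Matrix.add_mul, Matrix.mul_add, Matrix.mul_sub, Matrix.sub_mul, Matrix.mul_one,
      Matrix.one_mul, h2, h3, h4]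
    abel

lemma cpd_apply {d : ℕ} (k : ℕ) (A : Matrix (Fin d) (Fin d) ℝ) :
    cpd k A = (k.factorial : ℝ)⁻¹ • cmp k A + (1 - (k.factorial : ℝ)⁻¹ • cmp k 1) := rfl

lemma cmp_le {d : ℕ} (k : ℕ) (A : Matrix (Fin d) (Fin d) ℝ) (h : ∀ i j, |A i j| ≤ 1)
    (I J : Fin k → Fin d) : |cmp k A I J| ≤ k.factorial := by
  unfold cmp
  rw [Matrix.det_apply']
  refine (Finset.abs_sum_le_sum_abs _ _).trans ?_
  have : ∀ π ∈ (Finset.univ : Finset (Equiv.Perm (Fin k))),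
      |((Equiv.Perm.sign π : ℤ) : ℝ) * ∏ i, A.submatrix I J (π i) i| ≤ 1 := by
    intro π _
    rw [abs_mul]
    have h1 : |((Equiv.Perm.sign π : ℤ) : ℝ)| = 1 := by
      rw [← Int.cast_abs, Int.isUnit_iff_abs_eq.mp (Units.isUnit _)]; simp
    rw [h1, one_mul, Finset.abs_prod]
    exact Finset.prod_le_one (fun _ _ => abs_nonneg _) (fun i _ => h _ _)
  refine (Finset.sum_le_sum this).trans ?_
  simp [Finset.card_univ, Fintype.card_perm]

lemma one_entry_le {n : Type*} [DecidableEq n] (i j : n) : |(1 : Matrix n n ℝ) i j| ≤ 1 := by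
  rw [Matrix.one_apply]; split_ifs <;> simp

lemma cmp_normalized_le {d : ℕ} (k : ℕ) (A : Matrix (Fin d) (Fin d) ℝ) (h : ∀ i j, |A i j| ≤ 1)
    (I J : Fin k → Fin d) : |((k.factorial : ℝ)⁻¹ • cmp k A) I J| ≤ 1 := by
  have hk : (0 : ℝ) < k.factorial := by exact_mod_cast k.factorial_pos
  rw [Matrix.smul_apply, smul_eq_mul, abs_mul, abs_of_pos (inv_pos.mpr hk), inv_mul_le_one₀ hk]
  exact cmp_le k A h I J

lemma compl_entry_le {d : ℕ} (k : ℕ) (I J : Fin k → Fin d) :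
    |(1 - (k.factorial : ℝ)⁻¹ • cmp k (1 : Matrix (Fin d) (Fin d) ℝ)) I J| ≤ 2 := by
  rw [Matrix.sub_apply]
  have h1 := cmp_normalized_le k (1 : Matrix (Fin d) (Fin d) ℝ) one_entry_le I J
  have h2 := one_entry_le I J
  rw [abs_le] at *
  constructor <;> linarith

lemma cpd_entry_le {d : ℕ} (k : ℕ) (A : Matrix (Fin d) (Fin d) ℝ) (h : ∀ i j, |A i j| ≤ 1)
    (I J : Fin k → Fin d) : |cpd k A I J| ≤ 3 := by
  rw [cpd_apply, Matrix.add_apply]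
  have h1 := cmp_normalized_le k A h I J
  have h2 := compl_entry_le k I J
  rw [abs_le] at *
  constructor <;> linarith

lemma cmp_diagonal {d : ℕ} (k : ℕ) (s : Fin d → ℝ) (I J : Fin k → Fin d) :
    cmp k (diagonal s) I J = (∏ r, s (I r)) * cmp k 1 I J := by
  unfold cmp
  rw [← Matrix.det_mul_column]
  congr 1
  ext r t
  simp [Matrix.one_apply, Matrix.diagonal_apply]

lemma cmp_not_inj {d : ℕ} (k : ℕ) (A : Matrix (Fin d) (Fin d) ℝ) (I J : Fin k → Fin d)
    (h : ¬ Function.Injective I) : cmp k A I J = 0 := by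
  unfold Function.Injective at h
  push Not at h
  obtain ⟨r, t, h1, h2⟩ := h
  refine Matrix.det_zero_of_row_eq h2 ?_
  ext u
  simp [h1]

lemma wd_cmp_one_eq_zero {d : ℕ} (k : ℕ) (I I' J J' : Fin k → Fin d)
    (hI' : Function.Injective I')
    (h : Finset.univ.image I = Finset.univ.image I') :
    wd (cmp k (1 : Matrix (Fin d) (Fin d) ℝ)) (I, I') (J, J') = 0 := by
  have hex : ∀ r, ∃ t, I t = I' r := by
    intro r
    have : I' r ∈ Finset.univ.image I := by
      rw [h]; exact Finset.mem_image_of_mem _ (Finset.mem_univ r)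
    simpa using this
  choose f hf using hex
  have hfi : Function.Injective f := by
    intro a b hab
    apply hI'
    rw [← hf a, ← hf b, hab]
  let π : Equiv.Perm (Fin k) := Equiv.ofBijective f (Finite.injective_iff_bijective.mp hfi)
  have key : ∀ J, cmp k (1 : Matrix (Fin d) (Fin d) ℝ) I' J =
      ((Equiv.Perm.sign π : ℤ) : ℝ) * cmp k (1 : Matrix (Fin d) (Fin d) ℝ) I J := by
    intro J
    unfold cmp
    rw [← Matrix.det_permute]
    congr 1
    ext r t
    simp only [Matrix.submatrix_apply, id]
    rw [← hf r]
    rfl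
  simp only [wd, key]
  ring

/-! ## Products of decreasing sequences -/

section prods
variable {d : ℕ}

lemma prod_lt (s : Fin d → ℝ) (hpos : ∀ i, 0 < s i) (hanti : Antitone s)
    (k : ℕ) (hk : 1 ≤ k) (hkd : k < d) (S : Finset (Fin d)) (hS : S.card = k)
    (hne : S ≠ Finset.univ.filter (fun i : Fin d => (i : ℕ) < k)) :
    (∏ i ∈ S, s i) * s ⟨k - 1, by omega⟩ ≤
      (∏ i ∈ Finset.univ.filter (fun i : Fin d => (i : ℕ) < k), s i) * s ⟨k, hkd⟩ := by
  set t := Finset.univ.filter (fun i : Fin d => (i : ℕ) < k) with ht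
  have htc : t.card = k := by
    rw [ht, Fin.card_filter_val_lt]; omega
  set x := s ⟨k - 1, by omega⟩ with hx
  set y := s ⟨k, hkd⟩ with hy
  have hx0 : 0 < x := hpos _
  have hy0 : 0 < y := hpos _
  have hyx : y ≤ x := hanti (Fin.mk_le_mk.mpr (by omega))
  have hcard : (S \ t).card = (t \ S).card := Finset.card_sdiff_comm (by rw [hS, htc])
  obtain ⟨m, hm⟩ : ∃ m, (S \ t).card = m + 1 := by
    apply Nat.exists_eq_succ_of_ne_zero
    intro h0
    have h1 : S ⊆ t := Finset.sdiff_eq_empty_iff_subset.mp (Finset.card_eq_zero.mp h0)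
    exact hne (Finset.eq_of_subset_of_card_le h1 (by rw [hS, htc]))
  have hA : ∏ i ∈ S \ t, s i ≤ y ^ (m + 1) := by
    rw [← hm]
    rw [← Finset.prod_const]
    refine Finset.prod_le_prod (fun i _ => (hpos i).le) ?_
    intro i hi
    refine hanti ?_
    rw [Finset.mem_sdiff, ht, Finset.mem_filter] at hi
    have : ¬ (i : ℕ) < k := fun h => hi.2 ⟨Finset.mem_univ _, h⟩
    exact Fin.mk_le_of_le_val (by omega)
  have hB : x ^ (m + 1) ≤ ∏ i ∈ t \ S, s i := by
    rw [← hm, hcard, ← Finset.prod_const]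
    refine Finset.prod_le_prod (fun _ _ => hx0.le) ?_
    intro i hi
    refine hanti ?_
    rw [Finset.mem_sdiff, ht, Finset.mem_filter] at hi
    rw [Fin.le_def]
    have := hi.1.2
    change (i : ℕ) ≤ k - 1
    omega
  have e1 : ∏ i ∈ S, s i = (∏ i ∈ S ∩ t, s i) * ∏ i ∈ S \ t, s i :=
    (Finset.prod_inter_mul_prod_sdiff S t s).symm
  have e2 : ∏ i ∈ t, s i = (∏ i ∈ S ∩ t, s i) * ∏ i ∈ t \ S, s i := by
    rw [Finset.inter_comm]
    exact (Finset.prod_inter_mul_prod_sdiff t S s).symm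
  have hI : 0 < ∏ i ∈ S ∩ t, s i := Finset.prod_pos fun i _ => hpos i
  rw [e1, e2, mul_assoc, mul_assoc]
  refine mul_le_mul_of_nonneg_left ?_ hI.le
  have hp : y ^ m ≤ x ^ m := pow_le_pow_left₀ hy0.le hyx m
  calc (∏ i ∈ S \ t, s i) * x ≤ y ^ (m + 1) * x := by gcongr
    _ = y ^ m * (x * y) := by ring
    _ ≤ x ^ m * (x * y) := by gcongr
    _ = x ^ (m + 1) * y := by ring
    _ ≤ _ := by gcongr

lemma prod_le (s : Fin d → ℝ) (hpos : ∀ i, 0 < s i) (hanti : Antitone s)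
    (k : ℕ) (hk : 1 ≤ k) (hkd : k < d) (S : Finset (Fin d)) (hS : S.card = k) :
    (∏ i ∈ S, s i) ≤
      (∏ i ∈ Finset.univ.filter (fun i : Fin d => (i : ℕ) < k), s i) := by
  by_cases hne : S = Finset.univ.filter (fun i : Fin d => (i : ℕ) < k)
  · rw [hne]
  have h := prod_lt s hpos hanti k hk hkd S hS hne
  have hx0 := hpos ⟨k - 1, by omega⟩
  have hyx : s ⟨k, hkd⟩ ≤ s ⟨k - 1, by omega⟩ := hanti (Fin.mk_le_mk.mpr (by omega))
  refine le_of_mul_le_mul_right (h.trans ?_) hx0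
  refine mul_le_mul_of_nonneg_left hyx (Finset.prod_pos fun i _ => hpos i).le

lemma prod_growth (s : Fin d → ℝ) (hpos : ∀ i, 0 < s i) (hanti : Antitone s)
    (k : ℕ) (hk : 1 ≤ k) (hkd : k < d) (h1 : ∏ i, s i = 1) :
    s ⟨k - 1, by omega⟩ ≤
      (∏ i ∈ Finset.univ.filter (fun i : Fin d => (i : ℕ) < k), s i) ^ d * s ⟨k, hkd⟩ := by
  set t := Finset.univ.filter (fun i : Fin d => (i : ℕ) < k) with ht
  have htc : t.card = k := by
    rw [ht, Fin.card_filter_val_lt]; omega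
  set x := s ⟨k - 1, by omega⟩ with hx
  set y := s ⟨k, hkd⟩ with hy
  have hx0 : 0 < x := hpos _
  have hy0 : 0 < y := hpos _
  have hyx : y ≤ x := hanti (Fin.mk_le_mk.mpr (by omega))
  set p := ∏ i ∈ t, s i with hp
  have hp0 : 0 < p := Finset.prod_pos fun i _ => hpos i
  have hq : ∏ i ∈ tᶜ, s i ≤ y ^ (d - k) := by
    have : tᶜ.card = d - k := by rw [Finset.card_compl, htc, Fintype.card_fin]
    rw [← this]
    rw [← Finset.prod_const]
    refine Finset.prod_le_prod (fun i _ => (hpos i).le) ?_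
    intro i hi
    refine hanti ?_
    rw [Finset.mem_compl, ht, Finset.mem_filter] at hi
    have : ¬ (i : ℕ) < k := fun h => hi ⟨Finset.mem_univ _, h⟩
    exact Fin.mk_le_of_le_val (by omega)
  have hxp : x ^ k ≤ p := by
    rw [hp, ← htc, ← Finset.prod_const]
    refine Finset.prod_le_prod (fun _ _ => hx0.le) ?_
    intro i hi
    refine hanti ?_
    rw [ht, Finset.mem_filter] at hi
    rw [Fin.le_def]
    have := hi.2
    change (i : ℕ) ≤ k - 1
    omega
  have hpq : 1 ≤ p * y ^ (d - k) := by
    rw [← h1, ← Finset.prod_mul_prod_compl t s]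
    exact mul_le_mul_of_nonneg_left hq hp0.le
  set z := y / x with hz
  have hz0 : 0 < z := div_pos hy0 hx0
  have hz1 : z ≤ 1 := (div_le_one hx0).mpr hyx
  have hyz : y = x * z := by rw [hz]; field_simp
  obtain ⟨e, he⟩ : ∃ e, d = k + e := ⟨d - k, by omega⟩
  have hde : d - k = e := by omega
  rw [hde] at hpq
  have h2 : 1 ≤ p ^ d * z := by
    calc (1 : ℝ) ≤ (p * y ^ e) ^ k := one_le_pow₀ hpq
      _ = p ^ k * (x ^ k * z ^ k) ^ e := by rw [hyz, mul_pow, ← mul_pow x z k, ← pow_mul, ← pow_mul, mul_comm e k]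
      _ ≤ p ^ k * (p * z ^ k) ^ e := by gcongr
      _ = p ^ d * z ^ (k * e) := by rw [mul_pow, ← pow_mul, ← mul_assoc, ← pow_add, ← he]
      _ ≤ p ^ d * z ^ 1 := by
          refine mul_le_mul_of_nonneg_left ?_ (by positivity)
          exact pow_le_pow_of_le_one hz0.le hz1 (Nat.mul_pos (by omega) (by omega))
      _ = _ := by rw [pow_one]
  have := mul_le_mul_of_nonneg_left h2 hx0.le
  calc x = x * 1 := (mul_one x).symm
    _ ≤ x * (p ^ d * z) := this
    _ = p ^ d * y := by rw [hyz]; ring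

end prods

end FPA


namespace FPA

lemma prod_sval_eq_one {d : ℕ} (A O Q : Matrix (Fin d) (Fin d) ℝ) (s : Fin d → ℝ)
    (hdet : A.det = 1) (hO : Oᵀ * O = 1) (hQ : Qᵀ * Q = 1) (h : A = O * diagonal s * Q)
    (hpos : ∀ i, 0 < s i) : ∏ i, s i = 1 := by
  have hO' : O.det * O.det = 1 := by
    have := congrArg Matrix.det hO
    rwa [det_mul, det_transpose, det_one] at this
  have hQ' : Q.det * Q.det = 1 := by
    have := congrArg Matrix.det hQ
    rwa [det_mul, det_transpose, det_one] at this
  have hp : 0 < ∏ i, s i := Finset.prod_pos fun i _ => hpos i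
  rw [h, det_mul, det_mul, det_diagonal] at hdet
  have h2 : (∏ i, s i) * (∏ i, s i) = 1 := by
    calc (∏ i, s i) * (∏ i, s i)
        = (O.det * O.det) * (Q.det * Q.det) * ((∏ i, s i) * (∏ i, s i)) := by rw [hO', hQ']; ring
      _ = (O.det * (∏ i, s i) * Q.det) * (O.det * (∏ i, s i) * Q.det) := by ring
      _ = 1 := by rw [hdet]; ring
  nlinarith

/-- Estimates for the compound of a diagonal matrix. -/
lemma wd_cmp_diag_le {d : ℕ} (s : Fin d → ℝ) (hpos : ∀ i, 0 < s i) (hanti : Antitone s)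
    (k : ℕ) (hk : 1 ≤ k) (hkd : k < d) (P Q : (Fin k → Fin d) × (Fin k → Fin d)) :
    |wd ((k.factorial : ℝ)⁻¹ • cmp k (diagonal s)) P Q| * s ⟨k - 1, by omega⟩ ≤
      2 * (∏ i ∈ Finset.univ.filter (fun i : Fin d => (i : ℕ) < k), s i) ^ 2 * s ⟨k, hkd⟩ := by
  obtain ⟨I, I'⟩ := P
  obtain ⟨J, J'⟩ := Q
  have hk0 : (0 : ℝ) < k.factorial := by exact_mod_cast k.factorial_pos
  set p := ∏ i ∈ Finset.univ.filter (fun i : Fin d => (i : ℕ) < k), s i with hp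
  have hp0 : 0 < p := Finset.prod_pos fun i _ => hpos i
  set x := s ⟨k - 1, by omega⟩ with hx
  set y := s ⟨k, hkd⟩ with hy
  have hx0 : 0 < x := hpos _
  have hy0 : 0 < y := hpos _
  have e : wd ((k.factorial : ℝ)⁻¹ • cmp k (diagonal s)) (I, I') (J, J') =
      (∏ r, s (I r)) * (∏ r, s (I' r)) *
        wd ((k.factorial : ℝ)⁻¹ • cmp k (1 : Matrix (Fin d) (Fin d) ℝ)) (I, I') (J, J') := by
    simp only [wd, Matrix.smul_apply, cmp_diagonal, smul_eq_mul]; ring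
  have hR : 0 ≤ 2 * p ^ 2 * y := by positivity
  by_cases hI : Function.Injective I
  swap
  · have : wd ((k.factorial : ℝ)⁻¹ • cmp k (diagonal s)) (I, I') (J, J') = 0 := by
      simp [wd, cmp_not_inj k _ I _ hI]
    rw [this]; simpa using hR
  by_cases hI' : Function.Injective I'
  swap
  · have : wd ((k.factorial : ℝ)⁻¹ • cmp k (diagonal s)) (I, I') (J, J') = 0 := by
      simp [wd, cmp_not_inj k _ I' _ hI']
    rw [this]; simpa using hR
  by_cases himg : Finset.univ.image I = Finset.univ.image I'
  · have h0 := wd_cmp_one_eq_zero k I I' J J' hI' himg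
    rw [e, wd_smul, Matrix.smul_apply, h0]
    simpa using hR
  have hpI : ∏ r, s (I r) = ∏ i ∈ Finset.univ.image I, s i :=
    (Finset.prod_image (fun a _ b _ h => hI h)).symm
  have hpI' : ∏ r, s (I' r) = ∏ i ∈ Finset.univ.image I', s i :=
    (Finset.prod_image (fun a _ b _ h => hI' h)).symm
  have hcI : (Finset.univ.image I).card = k := by
    rw [Finset.card_image_of_injective _ hI, Finset.card_univ, Fintype.card_fin]
  have hcI' : (Finset.univ.image I').card = k := by
    rw [Finset.card_image_of_injective _ hI', Finset.card_univ, Fintype.card_fin]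
  have hprod : (∏ r, s (I r)) * (∏ r, s (I' r)) * x ≤ p ^ 2 * y := by
    have b1 := prod_le s hpos hanti k hk hkd _ hcI
    have b2 := prod_le s hpos hanti k hk hkd _ hcI'
    have z1 : 0 < ∏ r, s (I r) := Finset.prod_pos fun i _ => hpos _
    have z2 : 0 < ∏ r, s (I' r) := Finset.prod_pos fun i _ => hpos _
    rw [← hpI] at b1
    rw [← hpI'] at b2
    by_cases hc : Finset.univ.image I = Finset.univ.filter (fun i : Fin d => (i : ℕ) < k)
    · have hc' : Finset.univ.image I' ≠ Finset.univ.filter (fun i : Fin d => (i : ℕ) < k) := by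
        rw [← hc]; exact fun h => himg h.symm
      have b3 := prod_lt s hpos hanti k hk hkd _ hcI' hc'
      rw [← hpI'] at b3
      calc (∏ r, s (I r)) * (∏ r, s (I' r)) * x = (∏ r, s (I r)) * ((∏ r, s (I' r)) * x) := by ring
        _ ≤ p * (p * y) := mul_le_mul b1 b3 (by positivity) hp0.le
        _ = _ := by ring
    · have b3 := prod_lt s hpos hanti k hk hkd _ hcI hc
      rw [← hpI] at b3
      calc (∏ r, s (I r)) * (∏ r, s (I' r)) * x = (∏ r, s (I' r)) * ((∏ r, s (I r)) * x) := by ring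
        _ ≤ p * (p * y) := mul_le_mul b2 b3 (by positivity) hp0.le
        _ = _ := by ring
  have hwd : |wd ((k.factorial : ℝ)⁻¹ • cmp k (1 : Matrix (Fin d) (Fin d) ℝ)) (I, I') (J, J')| ≤ 2 := by
    have c := cmp_normalized_le k (1 : Matrix (Fin d) (Fin d) ℝ) one_entry_le
    simp only [wd]
    have c1 := mul_le_mul (c I J) (c I' J') (abs_nonneg _) zero_le_one
    have c2 := mul_le_mul (c I J') (c I' J) (abs_nonneg _) zero_le_one
    rw [← abs_mul] at c1 c2
    rw [abs_le] at *
    constructor <;> linarith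
  have z : 0 ≤ (∏ r, s (I r)) * (∏ r, s (I' r)) :=
    mul_nonneg (Finset.prod_pos fun i _ => hpos _).le (Finset.prod_pos fun i _ => hpos _).le
  rw [e, abs_mul, abs_of_nonneg z]
  calc _ = ((∏ r, s (I r)) * (∏ r, s (I' r)) * x) * |wd ((k.factorial : ℝ)⁻¹ • cmp k
        (1 : Matrix (Fin d) (Fin d) ℝ)) (I, I') (J, J')| := by ring
    _ ≤ (p ^ 2 * y) * 2 := mul_le_mul hprod hwd (abs_nonneg _) (by positivity)
    _ = _ := by ring

lemma cmp_diag_le {d : ℕ} (s : Fin d → ℝ) (hpos : ∀ i, 0 < s i) (hanti : Antitone s)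
    (k : ℕ) (hk : 1 ≤ k) (hkd : k < d) (I J : (Fin k → Fin d)) :
    |((k.factorial : ℝ)⁻¹ • cmp k (diagonal s)) I J| ≤
      (∏ i ∈ Finset.univ.filter (fun i : Fin d => (i : ℕ) < k), s i) := by
  have hp0 : 0 < ∏ i ∈ Finset.univ.filter (fun i : Fin d => (i : ℕ) < k), s i :=
    Finset.prod_pos fun i _ => hpos i
  by_cases hI : Function.Injective I
  swap
  · simp [cmp_not_inj k _ I _ hI, hp0.le]
  have hpI : ∏ r, s (I r) = ∏ i ∈ Finset.univ.image I, s i :=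
    (Finset.prod_image (fun a _ b _ h => hI h)).symm
  have hcI : (Finset.univ.image I).card = k := by
    rw [Finset.card_image_of_injective _ hI, Finset.card_univ, Fintype.card_fin]
  have b1 := prod_le s hpos hanti k hk hkd _ hcI
  rw [← hpI] at b1
  have c := cmp_normalized_le k (1 : Matrix (Fin d) (Fin d) ℝ) one_entry_le I J
  rw [Matrix.smul_apply, smul_eq_mul] at *
  have z1 : 0 < ∏ r, s (I r) := Finset.prod_pos fun i _ => hpos _
  rw [cmp_diagonal, mul_left_comm, abs_mul, abs_of_pos z1]
  calc _ ≤ (∏ i ∈ Finset.univ.filter (fun i : Fin d => (i : ℕ) < k), s i) * 1 :=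
        mul_le_mul b1 c (abs_nonneg _) hp0.le
    _ = _ := mul_one _

lemma cpd_diag_ge {d : ℕ} (s : Fin d → ℝ)
    (k : ℕ) (hkd : k < d) :
    (k.factorial : ℝ)⁻¹ * (∏ i ∈ Finset.univ.filter (fun i : Fin d => (i : ℕ) < k), s i) ≤
      nrm (cpd k (diagonal s)) := by
  set I : Fin k → Fin d := Fin.castLE hkd.le with hI
  have hinj : Function.Injective I := Fin.castLE_injective _
  have hk0 : (1 : ℝ) ≤ k.factorial := by exact_mod_cast k.factorial_pos
  have himg : Finset.univ.image I = Finset.univ.filter (fun i : Fin d => (i : ℕ) < k) := by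
    ext i
    simp only [Finset.mem_image, Finset.mem_univ, true_and, Finset.mem_filter]
    constructor
    · rintro ⟨r, rfl⟩; simp [hI]
    · intro h; exact ⟨⟨i, h⟩, by ext; simp [hI]⟩
  have hp : ∏ r, s (I r) = ∏ i ∈ Finset.univ.filter (fun i : Fin d => (i : ℕ) < k), s i := by
    rw [← himg]
    exact (Finset.prod_image (fun a _ b _ h => hinj h)).symm
  have h1 : cmp k (1 : Matrix (Fin d) (Fin d) ℝ) I I = 1 := by
    unfold cmp
    rw [Matrix.submatrix_one _ hinj, det_one]
  refine le_trans ?_ ((le_abs_self _).trans (abs_le_nrm (cpd k (diagonal s)) I I))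
  rw [cpd_apply, Matrix.add_apply, Matrix.sub_apply, Matrix.smul_apply, Matrix.smul_apply,
    cmp_diagonal, h1, hp, Matrix.one_apply_eq]
  simp only [smul_eq_mul, mul_one]
  have := inv_le_one_of_one_le₀ hk0
  linarith

set_option maxHeartbeats 2000000 in
lemma cpd_estimates {d : ℕ} (k : ℕ) (hk : 1 ≤ k) (hkd : k < d) :
    ∃ K c : ℝ, 0 < K ∧ 0 < c ∧ ∀ A : Matrix (Fin d) (Fin d) ℝ, A.det = 1 →
      ∃ p : ℝ, 1 ≤ p ∧ 0 < sval A k ∧ 0 < sval A (k + 1) ∧ c * p ≤ nrm (cpd k A) ∧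
        nrm (wd (cpd k A)) * sval A k ≤ K * (p ^ 2 * sval A (k + 1) + p * sval A k) ∧
        sval A k ≤ p ^ d * sval A (k + 1) := by
  set M : ℝ := (Fintype.card (Fin k → Fin d) : ℝ) with hM
  have hM0 : 0 < M := by
    have : Nonempty (Fin d) := ⟨⟨0, by omega⟩⟩
    rw [hM]; exact_mod_cast Fintype.card_pos
  have hk0 : (0 : ℝ) < k.factorial := by exact_mod_cast k.factorial_pos
  set B : ℝ := M * M * 3 with hB
  have hB0 : 0 < B := by positivity
  refine ⟨(2 * B ^ 2) * (2 * B ^ 2) * (2 * M ^ 4 + 16 * M ^ 4),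
    (B * B)⁻¹ * (k.factorial : ℝ)⁻¹, by positivity, by positivity, ?_⟩
  intro A hA
  obtain ⟨O, Q, hO1, hO2, hQ1, hQ2, hsvd, hpos, hanti⟩ := svd A (by rw [hA]; exact one_ne_zero)
  set s : Fin d → ℝ := fun i => sval A (i + 1) with hs
  replace hpos : ∀ i, 0 < s i := hpos
  have hsx : sval A k = s ⟨k - 1, by omega⟩ := by
    simp only [hs]; congr 1; omega
  have hsy : sval A (k + 1) = s ⟨k, hkd⟩ := rfl
  rw [hsx, hsy]
  have hprod := prod_sval_eq_one A O Q s hA hO1 hQ1 hsvd hpos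
  have hgrow := prod_growth s hpos hanti k hk hkd hprod
  have hest := wd_cmp_diag_le s hpos hanti k hk hkd
  have hest2 := cmp_diag_le s hpos hanti k hk hkd
  have hest3 := cpd_diag_ge s k hkd
  set p := ∏ i ∈ Finset.univ.filter (fun i : Fin d => (i : ℕ) < k), s i with hp
  have hp0 : 0 < p := Finset.prod_pos fun i _ => hpos i
  set x := s ⟨k - 1, by omega⟩ with hx
  set y := s ⟨k, hkd⟩ with hy
  have hx0 : 0 < x := hpos _
  have hy0 : 0 < y := hpos _
  have hyx : y ≤ x := hanti (Fin.mk_le_mk.mpr (by omega))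
  have hp1 : 1 ≤ p := by
    by_contra hlt
    push Not at hlt
    have h2 : p ^ d < 1 := pow_lt_one₀ hp0.le hlt (by omega)
    have h3 : p ^ d * y < 1 * y := mul_lt_mul_of_pos_right h2 hy0
    linarith
  have nO : ∀ X : Matrix (Fin d) (Fin d) ℝ, Xᵀ * X = 1 → nrm (cpd k X) ≤ B := fun X hX =>
    nrm_le_of_forall _ 3 (cpd_entry_le k X (orth_entry_le X hX))
  have wO : ∀ X : Matrix (Fin d) (Fin d) ℝ, Xᵀ * X = 1 → nrm (wd (cpd k X)) ≤ 2 * B ^ 2 := by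
    intro X hX
    refine (nrm_wd_le _).trans ?_
    have := pow_le_pow_left₀ (nrm_nonneg _) (nO X hX) 2
    linarith
  have hD : diagonal s = Oᵀ * A * Qᵀ := by
    rw [hsvd, ← Matrix.mul_assoc, ← Matrix.mul_assoc, hO1, Matrix.one_mul, Matrix.mul_assoc, hQ2,
      Matrix.mul_one]
  have hOt := nO Oᵀ (by rw [transpose_transpose]; exact hO2)
  have hQt := nO Qᵀ (by rw [transpose_transpose]; exact hQ2)
  refine ⟨p, hp1, hx0, hy0, ?_, ?_, hgrow⟩
  · have h1 : nrm (cpd k (diagonal s)) ≤ B * B * nrm (cpd k A) := by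
      rw [hD, map_mul, map_mul]
      refine (nrm_mul3_le _ _ _).trans ?_
      calc _ ≤ B * nrm (cpd k A) * B := by
            have := nrm_nonneg (cpd k A)
            have := nrm_nonneg (cpd k Qᵀ)
            gcongr
        _ = _ := by ring
    rw [mul_assoc, inv_mul_le_iff₀ (by positivity)]
    exact hest3.trans h1
  · set α := (k.factorial : ℝ)⁻¹ • cmp k (diagonal s) with hα
    set β := (1 : Matrix (Fin k → Fin d) (Fin k → Fin d) ℝ) - (k.factorial : ℝ)⁻¹ • cmp k 1 with hβ
    have b1 : nrm α ≤ M * M * p := nrm_le_of_forall _ p hest2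
    have b2 : nrm β ≤ M * M * 2 := nrm_le_of_forall _ 2 (compl_entry_le k)
    have b3 : nrm (wd α) * x ≤ 2 * M ^ 4 * (p ^ 2 * y) := by
      have : nrm (wd α) ≤ (M * M) * (M * M) * (2 * p ^ 2 * y / x) := by
        have := nrm_le_of_forall (wd α) (2 * p ^ 2 * y / x) (fun P Q => by
          rw [le_div_iff₀ hx0]; exact hest P Q)
        simpa [hM, Fintype.card_prod] using this
      calc nrm (wd α) * x ≤ (M * M) * (M * M) * (2 * p ^ 2 * y / x) * x := by gcongr
        _ = _ := by field_simp
    have b4 : nrm (wd (cpd k (diagonal s))) * x ≤ (2 * M ^ 4 + 16 * M ^ 4) * (p ^ 2 * y + p * x) := by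
      rw [cpd_apply]
      have h1 := nrm_wd_add_le α β
      have n1 := nrm_nonneg α
      have n2 := nrm_nonneg β
      have h2 : nrm α * nrm β ≤ (M * M * p) * (M * M * 2) := mul_le_mul b1 b2 n2 (by positivity)
      have h3 : nrm β ^ 2 ≤ (M * M * 2) ^ 2 := pow_le_pow_left₀ n2 b2 2
      have h4 : nrm (wd (α + β)) * x ≤ (nrm (wd α) + 4 * ((M * M * p) * (M * M * 2)) +
          2 * (M * M * 2) ^ 2) * x := by
        refine mul_le_mul_of_nonneg_right ?_ hx0.le
        linarith
      have h5 : M ^ 4 * x ≤ M ^ 4 * (p * x) := by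
        refine mul_le_mul_of_nonneg_left ?_ (by positivity)
        exact le_mul_of_one_le_left hx0.le hp1
      have h6 : 0 ≤ M ^ 4 * (p ^ 2 * y) := by positivity
      have h7 : 0 ≤ M ^ 4 * (p * x) := by positivity
      have e : (nrm (wd α) + 4 * ((M * M * p) * (M * M * 2)) + 2 * (M * M * 2) ^ 2) * x =
        nrm (wd α) * x + 8 * (M ^ 4 * (p * x)) + 8 * (M ^ 4 * x) := by ring
      rw [e] at h4
      refine h4.trans ?_
      have e2 : (2 * M ^ 4 + 16 * M ^ 4) * (p ^ 2 * y + p * x) =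
        18 * (M ^ 4 * (p ^ 2 * y)) + 18 * (M ^ 4 * (p * x)) := by ring
      rw [e2]
      linarith
    have h1 : nrm (wd (cpd k A)) ≤ (2 * B ^ 2) * (2 * B ^ 2) * nrm (wd (cpd k (diagonal s))) := by
      conv_lhs => rw [hsvd, map_mul, map_mul]
      refine (nrm_wd_mul3_le _ _ _).trans ?_
      have w1 := wO O hO1
      have w2 := wO Q hQ1
      calc _ ≤ (2 * B ^ 2) * nrm (wd (cpd k (diagonal s))) * (2 * B ^ 2) := by
            have := nrm_nonneg (wd (cpd k (diagonal s)))
            have := nrm_nonneg (wd (cpd k Q))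
            gcongr
        _ = _ := by ring
    calc nrm (wd (cpd k A)) * x
        ≤ (2 * B ^ 2) * (2 * B ^ 2) * nrm (wd (cpd k (diagonal s))) * x := by gcongr
      _ = (2 * B ^ 2) * (2 * B ^ 2) * (nrm (wd (cpd k (diagonal s))) * x) := by ring
      _ ≤ (2 * B ^ 2) * (2 * B ^ 2) * ((2 * M ^ 4 + 16 * M ^ 4) * (p ^ 2 * y + p * x)) := by gcongr
      _ = _ := by ring

end FPA

namespace FPA

open Real

/-- There is a finite dimensional representation with exponential first gap at rate `a` and
exponential growth at rate `g` with respect to the length function `ℓ`. -/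
def GapRep {Γ : Type*} [Group Γ] (ℓ : Γ → ℕ) (a g : ℝ) : Prop :=
  ∃ (ι : Type) (_ : Fintype ι) (_ : DecidableEq ι) (u : Γ →* Matrix ι ι ℝ) (K c : ℝ),
    0 < K ∧ 0 < c ∧ ∀ γ, nrm (wd (u γ)) ≤ K * exp (-(a * ℓ γ)) * nrm (u γ) ^ 2 ∧
      c * exp (g * ℓ γ) ≤ nrm (u γ)

lemma gap_of_anosov {Γ : Type*} [Group Γ] (ℓ : Γ → ℕ) {d : ℕ} (r : Γ →* Matrix (Fin d) (Fin d) ℝ)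
    (hr : ∀ γ, (r γ).det = 1) (k : ℕ) (hk : 1 ≤ k) (hkd : k < d) (a C : ℝ) (ha : 0 < a)
    (h : ∀ γ, a * ℓ γ - C ≤ log (sval (r γ) k) - log (sval (r γ) (k + 1))) :
    GapRep ℓ (a / d) (a / d) := by
  obtain ⟨K, c, hK, hc, H⟩ := cpd_estimates k hk hkd
  have hd : (1 : ℝ) ≤ d := by exact_mod_cast (by omega : 1 ≤ d)
  refine ⟨Fin k → Fin d, inferInstance, inferInstance, (cpd k).comp r,
    K * (exp C + exp (C / d)) / c ^ 2, c * exp (-(C / d)), by positivity, by positivity, ?_⟩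
  intro γ
  obtain ⟨p, hp1, hx0, hy0, h1, h2, h3⟩ := H (r γ) (hr γ)
  have hg := h γ
  rw [MonoidHom.comp_apply]
  generalize nrm (cpd k (r γ)) = n at *
  generalize nrm (wd (cpd k (r γ))) = m at *
  generalize sval (r γ) k = x at *
  generalize sval (r γ) (k + 1) = y at *
  have hl : (0 : ℝ) ≤ ℓ γ := Nat.cast_nonneg _
  generalize (ℓ γ : ℝ) = l at *
  have hp0 : 0 < p := by linarith
  have hlp : log x - log y ≤ d * log p := by
    have := log_le_log hx0 h3
    rw [log_mul (by positivity) hy0.ne', log_pow] at this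
    linarith
  have hpE : exp (a / d * l - C / d) ≤ p := by
    rw [← le_log_iff_exp_le hp0]
    have : a / d * l - C / d = (a * l - C) / d := by ring
    rw [this, div_le_iff₀ (by linarith)]
    linarith
  have hyx : y ≤ x * (exp C * exp (-(a / d * l))) := by
    have e1 : y = x * exp (-(log x - log y)) := by
      rw [neg_sub, exp_sub, exp_log hx0, exp_log hy0]; field_simp
    calc y = x * exp (-(log x - log y)) := e1
      _ ≤ _ := by
        rw [← exp_add]
        gcongr
        have : a / d * l ≤ a * l := by
          gcongr
          exact div_le_self ha.le hd
        linarith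
  have hpp : p ≤ p ^ 2 * (exp (C / d) * exp (-(a / d * l))) := by
    rw [← exp_add]
    have : 1 ≤ p * exp (C / d + -(a / d * l)) := by
      calc (1 : ℝ) = exp (a / d * l - C / d) * exp (C / d + -(a / d * l)) := by
            rw [← exp_add, show a / d * l - C / d + (C / d + -(a / d * l)) = 0 by ring, exp_zero]
        _ ≤ _ := by gcongr
    nlinarith
  constructor
  · have : m * x ≤ (K * (exp C + exp (C / d)) / c ^ 2 * exp (-(a / d * l)) * n ^ 2) * x := by
      calc m * x ≤ K * (p ^ 2 * y + p * x) := h2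
        _ ≤ K * (p ^ 2 * (x * (exp C * exp (-(a / d * l)))) +
              (p ^ 2 * (exp (C / d) * exp (-(a / d * l)))) * x) := by gcongr
        _ = (K * (exp C + exp (C / d)) / c ^ 2 * exp (-(a / d * l)) * (c * p) ^ 2) * x := by
            field_simp
        _ ≤ _ := by gcongr
    exact le_of_mul_le_mul_right this hx0
  · calc c * exp (-(C / d)) * exp (a / d * l) = c * exp (a / d * l - C / d) := by
          rw [mul_assoc, ← exp_add]; ring_nf
      _ ≤ c * p := by gcongr
      _ ≤ n := h1

/-- Kronecker square of a representation. -/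
noncomputable def krSq {Γ ι : Type*} [Monoid Γ] [Fintype ι] [DecidableEq ι]
    (u : Γ →* Matrix ι ι ℝ) : Γ →* Matrix (ι × ι) (ι × ι) ℝ where
  toFun γ := kroneckerMap (· * ·) (u γ) (u γ)
  map_one' := by rw [map_one]; exact Matrix.one_kronecker_one
  map_mul' x y := by rw [map_mul]; exact Matrix.mul_kronecker_mul _ _ _ _

lemma krSq_gap {Γ ι : Type*} [Group Γ] [Fintype ι] [DecidableEq ι]
    (u : Γ →* Matrix ι ι ℝ) (γ : Γ) (t : ℝ) (h : nrm (wd (u γ)) ≤ t * nrm (u γ) ^ 2) :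
    nrm (wd (krSq u γ)) ≤ 2 * (Fintype.card ι : ℝ) ^ 8 * t * nrm (krSq u γ) ^ 2 := by
  have h1 : nrm (krSq u γ) = nrm (u γ) * nrm (u γ) := nrm_kronecker _ _
  have h2 : nrm (wd (krSq u γ)) ≤ _ := nrm_wd_kronecker_le (u γ)
  refine h2.trans ?_
  rw [h1]
  have := nrm_nonneg (u γ)
  calc _ ≤ 2 * (Fintype.card ι : ℝ) ^ 8 * (nrm (u γ) ^ 2 * (t * nrm (u γ) ^ 2)) := by gcongr
    _ = _ := by ring

lemma gap_double {Γ : Type*} [Group Γ] (ℓ : Γ → ℕ) (a g : ℝ) (h : GapRep ℓ a g) :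
    GapRep ℓ a (2 * g) := by
  obtain ⟨ι, _, _, u, K, c, hK, hc, H⟩ := h
  refine ⟨ι × ι, inferInstance, inferInstance, krSq u, 2 * (Fintype.card ι : ℝ) ^ 8 * K + 1,
    c ^ 2, by positivity, by positivity, ?_⟩
  intro γ
  obtain ⟨h1, h2⟩ := H γ
  constructor
  · have := krSq_gap u γ _ h1
    refine this.trans ?_
    have n := nrm_nonneg (krSq u γ)
    rw [← mul_assoc]
    gcongr
    linarith
  · have h1 : nrm (krSq u γ) = nrm (u γ) * nrm (u γ) := nrm_kronecker _ _
    rw [h1]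
    calc c ^ 2 * exp (2 * g * ℓ γ) = (c * exp (g * ℓ γ)) * (c * exp (g * ℓ γ)) := by
          have : exp (2 * g * ℓ γ) = exp (g * ℓ γ) * exp (g * ℓ γ) := by
            rw [← exp_add]; ring_nf
          rw [this]; ring
      _ ≤ _ := by
          have := nrm_nonneg (u γ)
          gcongr

lemma gap_large {Γ : Type*} [Group Γ] (ℓ : Γ → ℕ) (a g b : ℝ) (hg : 0 < g) (h : GapRep ℓ a g) :
    GapRep ℓ a b := by
  have key : ∀ n : ℕ, GapRep ℓ a (2 ^ n * g) := by
    intro n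
    induction n with
    | zero => simpa using h
    | succ n ih =>
      have := gap_double ℓ a _ ih
      rwa [show 2 * (2 ^ n * g) = 2 ^ (n + 1) * g by ring] at this
  obtain ⟨n, hn⟩ := pow_unbounded_of_one_lt (b / g) (one_lt_two (α := ℝ))
  obtain ⟨ι, i1, i2, u, K, c, hK, hc, H⟩ := key n
  refine ⟨ι, i1, i2, u, K, c, hK, hc, fun γ => ⟨(H γ).1, le_trans ?_ (H γ).2⟩⟩
  rw [div_lt_iff₀ hg] at hn
  gcongr

end FPA

namespace FPA

open Real

/-- A representation with exponential gap and growth, and a matrix coefficient bounded below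
by the norm away from the identity. -/
def Good {Γ : Type*} [Group Γ] (ℓ : Γ → ℕ) {ι : Type*} [Fintype ι] [DecidableEq ι]
    (R : Γ →* Matrix ι ι ℝ) (f v : ι → ℝ) (a c K : ℝ) : Prop :=
  0 < a ∧ 0 < c ∧ 0 < K ∧
    (∀ γ, nrm (wd (R γ)) ≤ K * exp (-(a * ℓ γ)) * nrm (R γ) ^ 2) ∧
    (∀ γ, c * exp (a * ℓ γ) ≤ nrm (R γ)) ∧
    ∀ γ, γ ≠ 1 → c * nrm (R γ) ≤ |f ⬝ᵥ (R γ *ᵥ v) - f ⬝ᵥ v|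

lemma exists_avoid {Γ κ : Type*} [Fintype κ] (E : Set Γ) (hE : E.Finite) (h : Γ → ℝ)
    (W : Γ → κ → ℝ) (hW : ∀ γ ∈ E, W γ ≠ 0) :
    ∃ X : κ → ℝ, (∀ i, |X i| ≤ 1) ∧ ∀ γ ∈ E, h γ + X ⬝ᵥ W γ ≠ 0 := by
  classical
  let e := Fintype.equivFin κ
  let P : Γ → Polynomial ℝ := fun γ =>
    Polynomial.C (h γ) + ∑ i, Polynomial.C (W γ i) * Polynomial.X ^ ((e i : ℕ) + 1)
  have hP : ∀ γ ∈ E, P γ ≠ 0 := by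
    intro γ hγ h0
    apply hW γ hγ
    ext i
    have : (P γ).coeff ((e i : ℕ) + 1) = 0 := by rw [h0]; simp
    simp only [P, Polynomial.coeff_add, Polynomial.finsetSum_coeff, Polynomial.coeff_C_mul,
      Polynomial.coeff_X_pow, Polynomial.coeff_C] at this
    simp only [Nat.add_eq_zero_iff, one_ne_zero, and_false, if_false, zero_add, add_left_inj,
      Fin.val_inj, e.injective.eq_iff] at this
    simpa using this
  have hfin : (⋃ γ ∈ E, {x : ℝ | (P γ).IsRoot x}).Finite :=
    hE.biUnion fun γ hγ => Polynomial.finite_setOfPred_isRoot (hP γ hγ)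
  obtain ⟨x, hx, hx2⟩ := (Set.Ioo_infinite (zero_lt_one (α := ℝ))).exists_notMem_finite hfin
  refine ⟨fun i => x ^ ((e i : ℕ) + 1), fun i => ?_, fun γ hγ h0 => hx2 ?_⟩
  · rw [abs_of_nonneg (pow_nonneg hx.1.le _)]
    exact pow_le_one₀ hx.1.le hx.2.le
  · simp only [Set.mem_iUnion]
    refine ⟨γ, hγ, ?_⟩
    simp only [Set.mem_ofPred_eq, Polynomial.IsRoot, P, Polynomial.eval_add, Polynomial.eval_C,
      Polynomial.eval_finsetSum, Polynomial.eval_mul, Polynomial.eval_pow, Polynomial.eval_X]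
    rw [← h0, dotProduct]
    simp only [mul_comm]

lemma exists_min {Γ : Type*} (E : Set Γ) (hE : E.Finite) (D n : Γ → ℝ) (hn : ∀ γ, 0 ≤ n γ)
    (hD : ∀ γ ∈ E, D γ ≠ 0) : ∃ c : ℝ, 0 < c ∧ ∀ γ ∈ E, c * n γ ≤ |D γ| := by
  induction E, hE using Set.Finite.induction_on with
  | empty => exact ⟨1, one_pos, by simp⟩
  | @insert x E _ _ ih =>
    obtain ⟨c, hc, H⟩ := ih fun γ hγ => hD γ (Set.mem_insert_of_mem _ hγ)
    have hx := abs_pos.mpr (hD x (Set.mem_insert _ _))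
    have hx1 : 0 < n x + 1 := by linarith [hn x]
    refine ⟨min c (|D x| / (n x + 1)), lt_min hc (by positivity), ?_⟩
    intro γ hγ
    rcases hγ with rfl | hγ
    · calc _ ≤ |D γ| / (n γ + 1) * n γ := mul_le_mul_of_nonneg_right (min_le_right _ _) (hn _)
        _ ≤ |D γ| / (n γ + 1) * (n γ + 1) := by gcongr; linarith
        _ = _ := by field_simp
    · exact (mul_le_mul_of_nonneg_right (min_le_left _ _) (hn _)).trans (H γ hγ)

/-- direct sum of representations -/
noncomputable def dsum {Γ ι κ : Type*} [Monoid Γ] [Fintype ι] [DecidableEq ι] [Fintype κ]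
    [DecidableEq κ] (u : Γ →* Matrix ι ι ℝ) (w : Γ →* Matrix κ κ ℝ) :
    Γ →* Matrix (ι ⊕ κ) (ι ⊕ κ) ℝ where
  toFun γ := fromBlocks (u γ) 0 0 (w γ)
  map_one' := by rw [map_one, map_one, fromBlocks_one]
  map_mul' x y := by simp [fromBlocks_multiply]

/-- `1 ⊗ r` -/
noncomputable def oneKr {Γ κ ι : Type*} [Monoid Γ] [Fintype ι] [DecidableEq ι] [Fintype κ]
    [DecidableEq κ] (r : Γ →* Matrix ι ι ℝ) : Γ →* Matrix (κ × ι) (κ × ι) ℝ where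
  toFun γ := kroneckerMap (· * ·) (1 : Matrix κ κ ℝ) (r γ)
  map_one' := by rw [map_one]; exact Matrix.one_kronecker_one
  map_mul' x y := by
    rw [map_mul]
    have := Matrix.mul_kronecker_mul (1 : Matrix κ κ ℝ) (1 : Matrix κ κ ℝ) (r x) (r y)
    rw [Matrix.one_mul] at this
    exact this

/-- diagonal indicator vector -/
def dg (ι : Type*) [DecidableEq ι] : ι × ι → ℝ := fun p => if p.1 = p.2 then 1 else 0

lemma dg_dot {ι : Type*} [Fintype ι] [DecidableEq ι] (w : ι × ι → ℝ) :
    dg ι ⬝ᵥ w = ∑ i, w (i, i) := by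
  simp [dotProduct, dg, Fintype.sum_prod_type]

lemma krSq_coeff {Γ ι : Type*} [Monoid Γ] [Fintype ι] [DecidableEq ι]
    (u : Γ →* Matrix ι ι ℝ) (γ : Γ) :
    dg ι ⬝ᵥ (krSq u γ *ᵥ dg ι) = ∑ i, ∑ j, u γ i j ^ 2 := by
  rw [dg_dot]
  refine Finset.sum_congr rfl fun i _ => ?_
  rw [mulVec, dotProduct_comm, dg_dot]
  refine Finset.sum_congr rfl fun j _ => ?_
  simp only [krSq, MonoidHom.coe_mk, OneHom.coe_mk, kroneckerMap_apply]
  ring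

lemma oneKr_vec {Γ ι : Type*} [Monoid Γ] [Fintype ι] [DecidableEq ι]
    (r : Γ →* Matrix ι ι ℝ) (γ : Γ) (p : ι × ι) :
    (oneKr (κ := ι) r γ *ᵥ dg ι) p = r γ p.2 p.1 := by
  rw [mulVec, dotProduct_comm, dg_dot]
  simp only [oneKr, MonoidHom.coe_mk, OneHom.coe_mk, kroneckerMap_apply, one_apply]
  simp

lemma nrm_sq_le {ι : Type*} [Fintype ι] (A : Matrix ι ι ℝ) :
    nrm A ^ 2 ≤ (Fintype.card ι : ℝ) ^ 2 * ∑ i, ∑ j, A i j ^ 2 := by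
  have h := sq_sum_le_card_mul_sum_sq (s := (Finset.univ : Finset (ι × ι)))
    (f := fun p => |A p.1 p.2|)
  simp only [Fintype.sum_prod_type, sq_abs, Finset.card_univ, Fintype.card_prod] at h
  rw [sq (Fintype.card ι : ℝ)]
  exact_mod_cast h

lemma abs_dot_le {ι : Type*} [Fintype ι] (X : ι × ι → ℝ) (hX : ∀ i, |X i| ≤ 1)
    (A : Matrix ι ι ℝ) : |X ⬝ᵥ (fun p => A p.2 p.1)| ≤ nrm A := by
  rw [dotProduct]
  refine (Finset.abs_sum_le_sum_abs _ _).trans ?_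
  rw [Fintype.sum_prod_type, Finset.sum_comm]
  refine Finset.sum_le_sum fun i _ => Finset.sum_le_sum fun j _ => ?_
  rw [abs_mul]
  exact mul_le_of_le_one_left (abs_nonneg _) (hX _)

end FPA

namespace FPA

open Real

lemma dsum_apply {Γ ι κ : Type*} [Monoid Γ] [Fintype ι] [DecidableEq ι] [Fintype κ]
    [DecidableEq κ] (u : Γ →* Matrix ι ι ℝ) (w : Γ →* Matrix κ κ ℝ) (γ : Γ) :
    dsum u w γ = fromBlocks (u γ) 0 0 (w γ) := rfl

lemma dsum_coeff {Γ ι κ : Type*} [Monoid Γ] [Fintype ι] [DecidableEq ι] [Fintype κ]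
    [DecidableEq κ] (u : Γ →* Matrix ι ι ℝ) (w : Γ →* Matrix κ κ ℝ) (γ : Γ)
    (f v : ι → ℝ) (f' v' : κ → ℝ) :
    Sum.elim f f' ⬝ᵥ (dsum u w γ *ᵥ Sum.elim v v') =
      f ⬝ᵥ (u γ *ᵥ v) + f' ⬝ᵥ (w γ *ᵥ v') := by
  rw [dsum_apply, fromBlocks_mulVec]
  simp [sumElim_dotProduct_sumElim]

lemma good_estimates {Γ : Type*} [Group Γ] (ℓ : Γ → ℕ) {d : ℕ} (r : Γ →* Matrix (Fin d) (Fin d) ℝ)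
    (B b : ℝ) (hB : 0 < B) (hb : 0 ≤ b) (hrB : ∀ γ, nrm (r γ) ≤ B * exp (b * ℓ γ))
    (a g : ℝ) (ha : 0 < a) (hg : 0 < g) (hgap : GapRep ℓ a g) :
    ∃ (ι : Type) (_ : Fintype ι) (_ : DecidableEq ι) (u : Γ →* Matrix ι ι ℝ) (B' c K : ℝ),
      0 < B' ∧ 0 < c ∧ 0 < K ∧ ∀ γ,
        nrm (r γ) ≤ B' * exp (-(a * ℓ γ)) * nrm (krSq u γ) ∧
        c * exp (a * ℓ γ) ≤ nrm (krSq u γ) ∧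
        nrm (wd (krSq u γ)) ≤ K * exp (-(a * ℓ γ)) * nrm (krSq u γ) ^ 2 := by
  obtain ⟨ι, i1, i2, u, K, c, hK, hc, H⟩ := gap_large ℓ a g (b + a) hg hgap
  refine ⟨ι, i1, i2, u, B / c ^ 2, c ^ 2, 2 * (Fintype.card ι : ℝ) ^ 8 * K + 1, by positivity,
    by positivity, by positivity, ?_⟩
  intro γ
  obtain ⟨h1, h2⟩ := H γ
  have hT : nrm (krSq u γ) = nrm (u γ) * nrm (u γ) := nrm_kronecker _ _
  have hl : (0 : ℝ) ≤ ℓ γ := Nat.cast_nonneg _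
  have hTg : c ^ 2 * exp ((b + a) * ℓ γ) ≤ nrm (krSq u γ) := by
    rw [hT]
    calc c ^ 2 * exp ((b + a) * ℓ γ) ≤ c ^ 2 * exp ((b + a) * ℓ γ + (b + a) * ℓ γ) := by
          gcongr
          have : 0 ≤ (b + a) * ℓ γ := by positivity
          linarith
      _ = (c * exp ((b + a) * ℓ γ)) * (c * exp ((b + a) * ℓ γ)) := by rw [exp_add]; ring
      _ ≤ _ := by
        have := nrm_nonneg (u γ)
        gcongr
  refine ⟨?_, ?_, ?_⟩
  · calc nrm (r γ) ≤ B * exp (b * ℓ γ) := hrB γ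
      _ = B / c ^ 2 * exp (-(a * ℓ γ)) * (c ^ 2 * exp ((b + a) * ℓ γ)) := by
        rw [show b * (ℓ γ : ℝ) = -(a * ℓ γ) + (b + a) * ℓ γ by ring, exp_add]
        field_simp
      _ ≤ _ := by gcongr
  · refine le_trans ?_ hTg
    gcongr
    linarith
  · have := krSq_gap u γ _ h1
    refine this.trans ?_
    have n := nrm_nonneg (krSq u γ)
    rw [← mul_assoc]
    gcongr
    linarith

lemma oneKr_nrm {Γ : Type*} [Monoid Γ] {d : ℕ} (r : Γ →* Matrix (Fin d) (Fin d) ℝ) (γ : Γ) :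
    nrm (oneKr (κ := Fin d) r γ) = d * nrm (r γ) := by
  have : nrm (oneKr (κ := Fin d) r γ) = nrm (1 : Matrix (Fin d) (Fin d) ℝ) * nrm (r γ) :=
    nrm_kronecker _ _
  rw [this]
  congr 1
  simp only [nrm, one_apply, apply_ite abs, abs_one, abs_zero]
  simp

lemma good_exists {Γ : Type*} [Group Γ] (ℓ : Γ → ℕ) {d : ℕ} (r : Γ →* Matrix (Fin d) (Fin d) ℝ)
    (hinj : Function.Injective r) (hfin : ∀ L : ℕ, {γ | ℓ γ ≤ L}.Finite)
    (B b : ℝ) (hB : 0 < B) (hb : 0 ≤ b) (hrB : ∀ γ, nrm (r γ) ≤ B * exp (b * ℓ γ))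
    (a g : ℝ) (ha : 0 < a) (hg : 0 < g) (hgap : GapRep ℓ a g) :
    ∃ (ι : Type) (_ : Fintype ι) (_ : DecidableEq ι) (R : Γ →* Matrix ι ι ℝ) (f v : ι → ℝ)
      (c K : ℝ), Good ℓ R f v a c K := by
  obtain ⟨ι, i1, i2, u, B', c, K, hB', hc, hK, H⟩ :=
    good_estimates ℓ r B b hB hb hrB a g ha hg hgap
  set N : ℝ := (Fintype.card ι : ℝ) with hN
  set F : Γ → ℝ := fun γ => dg ι ⬝ᵥ (krSq u γ *ᵥ dg ι) with hF
  have hF1 : ∀ γ, nrm (krSq u γ) ≤ N ^ 2 * F γ := by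
    intro γ
    have hT : nrm (krSq u γ) = nrm (u γ) * nrm (u γ) := nrm_kronecker _ _
    rw [hT, ← sq]
    simp only [hF, krSq_coeff]
    exact nrm_sq_le _
  have hN0 : 0 < N := by
    have h1 := (H 1).2.1
    have h2 : 0 < c * exp (a * ℓ (1 : Γ)) := by positivity
    have h3 := hF1 1
    rcases (Nat.cast_nonneg (Fintype.card ι) : (0 : ℝ) ≤ N).lt_or_eq with h | h
    · exact h
    · replace h : 0 = N := h
      rw [← h, zero_pow two_ne_zero, zero_mul] at h3
      linarith
  set R := dsum (krSq u) (oneKr (κ := Fin d) r) with hR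
  set C0 : ℝ := |F 1| + nrm (1 : Matrix (Fin d) (Fin d) ℝ) with hC0
  have hC00 : 0 ≤ C0 := add_nonneg (abs_nonneg _) (nrm_nonneg _)
  set C1 : ℝ := B' + C0 / c with hC1
  have hC10 : 0 < C1 := by positivity
  obtain ⟨L, hL⟩ : ∃ L : ℕ, ∀ l : ℕ, L < l → C1 * exp (-(a * l)) ≤ 1 / (2 * N ^ 2) := by
    obtain ⟨L, hL⟩ := exists_nat_ge (2 * N ^ 2 * C1 / a)
    refine ⟨L, fun l hl => ?_⟩
    rw [Real.exp_neg, ← div_eq_mul_inv, div_le_div_iff₀ (exp_pos _) (by positivity)]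
    have h1 := add_one_le_exp (a * l)
    have h2 : (L : ℝ) ≤ l := by exact_mod_cast hl.le
    rw [div_le_iff₀ ha] at hL
    nlinarith
  set D : (Fin d × Fin d → ℝ) → Γ → ℝ := fun X γ =>
    (F γ - F 1) + X ⬝ᵥ (fun p => (r γ - 1) p.2 p.1) with hD
  have hDeq : ∀ X γ, Sum.elim (dg ι) X ⬝ᵥ (R γ *ᵥ Sum.elim (dg ι) (dg (Fin d))) -
      Sum.elim (dg ι) X ⬝ᵥ Sum.elim (dg ι) (dg (Fin d)) = D X γ := by
    intro X γ
    have e1 := dsum_coeff (krSq u) (oneKr (κ := Fin d) r) 1 (dg ι) (dg ι) X (dg (Fin d))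
    rw [map_one, one_mulVec] at e1
    rw [e1, hR, dsum_coeff]
    have e2 : ∀ γ, oneKr (κ := Fin d) r γ *ᵥ dg (Fin d) = fun p => r γ p.2 p.1 :=
      fun γ => funext fun p => oneKr_vec r γ p
    rw [e2, e2]
    have e3 : (fun p : Fin d × Fin d => (r γ - 1) p.2 p.1) =
        (fun p => r γ p.2 p.1) - (fun p => r 1 p.2 p.1) := by
      funext p
      simp [map_one]
    simp only [hD, hF, e3, dotProduct_sub]
    ring
  have hbig : ∀ X : Fin d × Fin d → ℝ, (∀ i, |X i| ≤ 1) → ∀ γ, L < ℓ γ →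
      (1 / (2 * N ^ 2)) * nrm (krSq u γ) ≤ |D X γ| := by
    intro X hX γ hγ
    obtain ⟨h1, h2, h3⟩ := H γ
    have h4 := hL _ hγ
    have h5 := hF1 γ
    have h6 : |X ⬝ᵥ (fun p => (r γ - 1) p.2 p.1)| ≤ nrm (r γ - 1) := abs_dot_le X hX _
    have h7 : nrm (r γ - 1) ≤ nrm (r γ) + nrm (1 : Matrix (Fin d) (Fin d) ℝ) := by
      rw [sub_eq_add_neg]
      refine (nrm_add_le _ _).trans ?_
      have : nrm (-(1 : Matrix (Fin d) (Fin d) ℝ)) = nrm (1 : Matrix (Fin d) (Fin d) ℝ) := by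
        simp [nrm]
      rw [this]
    have h8 : C0 ≤ C0 / c * exp (-(a * ℓ γ)) * nrm (krSq u γ) := by
      calc C0 = C0 / c * exp (-(a * ℓ γ)) * (c * exp (a * ℓ γ)) := by
            rw [Real.exp_neg]; field_simp
        _ ≤ _ := by gcongr
    have h9 : C1 * exp (-(a * ℓ γ)) * nrm (krSq u γ) ≤ 1 / (2 * N ^ 2) * nrm (krSq u γ) :=
      mul_le_mul_of_nonneg_right h4 (nrm_nonneg _)
    have h10 : nrm (krSq u γ) / N ^ 2 ≤ F γ := by
      rw [div_le_iff₀ (by positivity)]; linarith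
    have h11 : nrm (krSq u γ) / N ^ 2 = 1 / (2 * N ^ 2) * nrm (krSq u γ) +
      1 / (2 * N ^ 2) * nrm (krSq u γ) := by field_simp; norm_num
    have h12 : C1 * exp (-(a * ℓ γ)) * nrm (krSq u γ) = B' * exp (-(a * ℓ γ)) * nrm (krSq u γ) +
      C0 / c * exp (-(a * ℓ γ)) * nrm (krSq u γ) := by rw [hC1]; ring
    have h13 := (abs_le.mp h6).1
    have h14 := le_abs_self (F 1)
    have h15 := le_abs_self (D X γ)
    have h16 : D X γ = (F γ - F 1) + X ⬝ᵥ (fun p => (r γ - 1) p.2 p.1) := rfl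
    linarith
  obtain ⟨X, hX1, hX2⟩ := exists_avoid {γ | ℓ γ ≤ L ∧ γ ≠ 1} ((hfin L).subset fun γ h => h.1)
    (fun γ => F γ - F 1) (fun γ => fun p : Fin d × Fin d => (r γ - 1) p.2 p.1) (by
      rintro γ ⟨_, hγ⟩ h0
      apply hγ
      apply hinj
      rw [map_one]
      ext i j
      have := congrFun h0 (j, i)
      simp only [Matrix.sub_apply, Pi.zero_apply] at this
      linarith)
  obtain ⟨c2, hc2, hmin⟩ := exists_min {γ | ℓ γ ≤ L ∧ γ ≠ 1} ((hfin L).subset fun γ h => h.1)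
    (D X) (fun γ => nrm (R γ)) (fun γ => nrm_nonneg _) hX2
  have hRn : ∀ γ, nrm (R γ) = nrm (krSq u γ) + d * nrm (r γ) := by
    intro γ
    rw [← oneKr_nrm]; exact nrm_fromBlocks _ _
  have hexp : ∀ γ, exp (-(a * ℓ γ)) ≤ 1 := by
    intro γ
    rw [exp_le_one_iff]
    have : 0 ≤ a * ℓ γ := by positivity
    linarith
  have hrs : ∀ γ, d * nrm (r γ) ≤ d * B' * exp (-(a * ℓ γ)) * nrm (krSq u γ) := by
    intro γ
    have := mul_le_mul_of_nonneg_left (H γ).1 (Nat.cast_nonneg (α := ℝ) d)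
    linarith
  have hTR : ∀ γ, nrm (krSq u γ) ≤ nrm (R γ) := by
    intro γ
    rw [hRn]
    have := nrm_nonneg (r γ)
    have : 0 ≤ d * nrm (r γ) := by positivity
    linarith
  have hrs2 : ∀ γ, d * nrm (r γ) ≤ d * B' * nrm (krSq u γ) := by
    intro γ
    refine (hrs γ).trans ?_
    have := nrm_nonneg (krSq u γ)
    calc d * B' * exp (-(a * ℓ γ)) * nrm (krSq u γ) ≤ d * B' * 1 * nrm (krSq u γ) := by
          gcongr
          exact hexp γ
      _ = _ := by ring
  set c3 := 1 / (2 * N ^ 2) / (1 + d * B') with hc3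
  have hc30 : 0 < c3 := by positivity
  refine ⟨(ι × ι) ⊕ (Fin d × Fin d), inferInstance, inferInstance, R, Sum.elim (dg ι) X,
    Sum.elim (dg ι) (dg (Fin d)), min c (min c2 c3),
    K + 4 * (d * B') + 2 * (d * B') ^ 2, ha, lt_min hc (lt_min hc2 hc30), by positivity, ?_, ?_, ?_⟩
  · intro γ
    have h1 : nrm (wd (R γ)) ≤ nrm (wd (krSq u γ)) + 4 * (nrm (krSq u γ) *
        nrm (oneKr (κ := Fin d) r γ)) + 2 * nrm (oneKr (κ := Fin d) r γ) ^ 2 :=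
      nrm_wd_fromBlocks _ _
    rw [oneKr_nrm] at h1
    obtain ⟨_, _, h3⟩ := H γ
    have p1 := hrs γ
    have p2 := hrs2 γ
    have p3 := hTR γ
    have p4 := nrm_nonneg (krSq u γ)
    have p5 := nrm_nonneg (r γ)
    have p6 : (0 : ℝ) ≤ d * nrm (r γ) := by positivity
    calc nrm (wd (R γ)) ≤ _ := h1
      _ ≤ K * exp (-(a * ℓ γ)) * nrm (krSq u γ) ^ 2 + 4 * (nrm (krSq u γ) *
          (d * B' * exp (-(a * ℓ γ)) * nrm (krSq u γ))) +
          2 * ((d * B' * nrm (krSq u γ)) * (d * B' * exp (-(a * ℓ γ)) * nrm (krSq u γ))) := by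
        rw [sq (d * nrm (r γ))]
        gcongr
      _ = (K + 4 * (d * B') + 2 * (d * B') ^ 2) * exp (-(a * ℓ γ)) * nrm (krSq u γ) ^ 2 := by ring
      _ ≤ _ := by gcongr
  · intro γ
    refine le_trans ?_ ((H γ).2.1.trans (hTR γ))
    gcongr
    exact min_le_left _ _
  · intro γ hγ
    rw [hDeq]
    by_cases hl : ℓ γ ≤ L
    · refine le_trans ?_ (hmin γ ⟨hl, hγ⟩)
      refine mul_le_mul_of_nonneg_right ?_ (nrm_nonneg _)
      exact (min_le_right _ _).trans (min_le_left _ _)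
    · refine le_trans ?_ (hbig X hX1 γ (not_le.mp hl))
      have h1 : nrm (R γ) ≤ (1 + d * B') * nrm (krSq u γ) := by
        rw [hRn]
        have := hrs2 γ
        linarith
      calc min c (min c2 c3) * nrm (R γ) ≤ c3 * ((1 + d * B') * nrm (krSq u γ)) := by
            have := nrm_nonneg (R γ)
            gcongr
            exact (min_le_right _ _).trans (min_le_right _ _)
        _ = _ := by
            rw [hc3]; field_simp

end FPA

namespace FPA

open Real

/-- Reindexing of a representation. -/
noncomputable def repSub {Γ ι κ : Type*} [Monoid Γ] [Fintype ι] [DecidableEq ι] [Fintype κ]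
    [DecidableEq κ] (u : Γ →* Matrix ι ι ℝ) (e : κ ≃ ι) : Γ →* Matrix κ κ ℝ where
  toFun γ := (u γ).submatrix e e
  map_one' := by rw [map_one]; exact Matrix.submatrix_one_equiv e
  map_mul' x y := by rw [map_mul]; exact (Matrix.submatrix_mul_equiv _ _ _ _ _).symm

lemma good_repSub {Γ ι κ : Type*} [Group Γ] (ℓ : Γ → ℕ) [Fintype ι] [DecidableEq ι] [Fintype κ]
    [DecidableEq κ] (R : Γ →* Matrix ι ι ℝ) (f v : ι → ℝ) (a c K : ℝ) (h : Good ℓ R f v a c K)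
    (e : κ ≃ ι) : Good ℓ (repSub R e) (f ∘ e) (v ∘ e) a c K := by
  obtain ⟨h1, h2, h3, h4, h5, h6⟩ := h
  have n1 : ∀ γ, nrm (repSub R e γ) = nrm (R γ) := fun γ => nrm_submatrix _ _
  have n2 : ∀ γ, nrm (wd (repSub R e γ)) = nrm (wd (R γ)) := fun γ => nrm_wd_submatrix _ _
  refine ⟨h1, h2, h3, ?_, ?_, ?_⟩
  · intro γ; rw [n1, n2]; exact h4 γ
  · intro γ; rw [n1]; exact h5 γ
  · intro γ hγ; rw [n1]
    have e1 : ∀ x y : ι → ℝ, (x ∘ e) ⬝ᵥ (y ∘ e) = x ⬝ᵥ y := fun x y =>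
      e.sum_comp (fun i => x i * y i)
    have e2 : repSub R e γ *ᵥ (v ∘ e) = (R γ *ᵥ v) ∘ e := by
      funext i
      exact e.sum_comp (fun j => R γ (e i) j * v j)
    rw [e2, e1, e1]
    exact h6 γ hγ

lemma good_mono {Γ ι : Type*} [Group Γ] (ℓ : Γ → ℕ) [Fintype ι] [DecidableEq ι]
    (R : Γ →* Matrix ι ι ℝ) (f v : ι → ℝ) (a a' c K : ℝ) (h : Good ℓ R f v a c K)
    (h0 : 0 < a') (ha : a' ≤ a) : Good ℓ R f v a' c K := by
  obtain ⟨h1, h2, h3, h4, h5, h6⟩ := h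
  refine ⟨h0, h2, h3, ?_, ?_, h6⟩
  · intro γ
    refine (h4 γ).trans ?_
    gcongr
  · intro γ
    refine le_trans ?_ (h5 γ)
    gcongr

lemma good_pad {Γ ι κ : Type*} [Group Γ] (ℓ : Γ → ℕ) [Fintype ι] [DecidableEq ι] [Fintype κ]
    [DecidableEq κ] (R : Γ →* Matrix ι ι ℝ) (f v : ι → ℝ) (a c K : ℝ) (h : Good ℓ R f v a c K) :
    ∃ c' K', Good ℓ (dsum R (1 : Γ →* Matrix κ κ ℝ)) (Sum.elim f 0) (Sum.elim v 0) a c' K' := by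
  obtain ⟨ha, hc, hK, h4, h5, h6⟩ := h
  set k := nrm (1 : Matrix κ κ ℝ) with hk
  have hk0 : 0 ≤ k := nrm_nonneg _
  have hn : ∀ γ, nrm (dsum R (1 : Γ →* Matrix κ κ ℝ) γ) = nrm (R γ) + k := fun γ =>
    nrm_fromBlocks _ _
  have hw : ∀ γ, nrm (wd (dsum R (1 : Γ →* Matrix κ κ ℝ) γ)) ≤
      nrm (wd (R γ)) + 4 * (nrm (R γ) * k) + 2 * k ^ 2 := fun γ => nrm_wd_fromBlocks _ _
  have hke : ∀ γ, k ≤ k / c * exp (-(a * ℓ γ)) * nrm (R γ) := by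
    intro γ
    calc k = k / c * exp (-(a * ℓ γ)) * (c * exp (a * ℓ γ)) := by
          rw [Real.exp_neg]; field_simp
      _ ≤ _ := by
        gcongr
        exact h5 γ
  have hexp : ∀ γ, exp (-(a * ℓ γ)) ≤ 1 := by
    intro γ
    rw [exp_le_one_iff]
    have : 0 ≤ a * ℓ γ := by positivity
    linarith
  have hke2 : ∀ γ, k ≤ k / c * nrm (R γ) := by
    intro γ
    refine (hke γ).trans ?_
    have := nrm_nonneg (R γ)
    calc k / c * exp (-(a * ℓ γ)) * nrm (R γ) ≤ k / c * 1 * nrm (R γ) := by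
          gcongr
          exact hexp γ
      _ = _ := by ring
  have hkc : 0 ≤ k / c := by positivity
  refine ⟨c / (1 + k / c), K + 4 * (k / c) + 2 * (k / c) ^ 2, ha, by positivity, by positivity,
    ?_, ?_, ?_⟩
  · intro γ
    refine (hw γ).trans ?_
    have p0 := nrm_nonneg (R γ)
    calc nrm (wd (R γ)) + 4 * (nrm (R γ) * k) + 2 * k ^ 2
        ≤ K * exp (-(a * ℓ γ)) * nrm (R γ) ^ 2 +
          4 * (nrm (R γ) * (k / c * exp (-(a * ℓ γ)) * nrm (R γ))) +
          2 * ((k / c * nrm (R γ)) * (k / c * exp (-(a * ℓ γ)) * nrm (R γ))) := by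
          rw [sq k]
          have q1 := hke γ
          have q2 := hke2 γ
          have q3 := h4 γ
          gcongr
      _ = (K + 4 * (k / c) + 2 * (k / c) ^ 2) * exp (-(a * ℓ γ)) * nrm (R γ) ^ 2 := by ring
      _ ≤ _ := by
        rw [hn]
        gcongr
        linarith
  · intro γ
    rw [hn]
    have : c / (1 + k / c) ≤ c := div_le_self hc.le (by linarith)
    calc c / (1 + k / c) * exp (a * ℓ γ) ≤ c * exp (a * ℓ γ) := by gcongr
      _ ≤ nrm (R γ) := h5 γ
      _ ≤ _ := by linarith
  · intro γ hγ
    have e1 := dsum_coeff R (1 : Γ →* Matrix κ κ ℝ) 1 f v 0 0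
    rw [map_one, one_mulVec] at e1
    rw [e1, dsum_coeff, map_one, one_mulVec]
    simp only [MonoidHom.one_apply, zero_dotProduct, add_zero]
    refine le_trans ?_ (h6 γ hγ)
    rw [hn]
    have := hke2 γ
    have p0 := nrm_nonneg (R γ)
    calc c / (1 + k / c) * (nrm (R γ) + k) ≤ c / (1 + k / c) * ((1 + k / c) * nrm (R γ)) := by
          gcongr
          linarith
      _ = c * nrm (R γ) := by
          have : (1 + k / c) ≠ 0 := by positivity
          rw [← mul_assoc, div_mul_cancel₀ _ this]

/-- Conjugated representation. -/
noncomputable def conjRep {Γ ι : Type*} [Monoid Γ] [Fintype ι] [DecidableEq ι]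
    (R : Γ →* Matrix ι ι ℝ) (Q' Q : Matrix ι ι ℝ) (h : Q' * Q = 1) : Γ →* Matrix ι ι ℝ where
  toFun γ := Q' * R γ * Q
  map_one' := by rw [map_one, Matrix.mul_one, h]
  map_mul' x y := by
    have h' : Q * Q' = 1 := mul_eq_one_comm.mp h
    rw [map_mul]
    calc Q' * (R x * R y) * Q = Q' * R x * (1 * R y) * Q := by
          simp only [Matrix.mul_assoc, Matrix.one_mul]
      _ = _ := by rw [← h']; simp only [Matrix.mul_assoc]

lemma conjRep_apply {Γ ι : Type*} [Monoid Γ] [Fintype ι] [DecidableEq ι]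
    (R : Γ →* Matrix ι ι ℝ) (Q' Q : Matrix ι ι ℝ) (h : Q' * Q = 1) (γ : Γ) :
    conjRep R Q' Q h γ = Q' * R γ * Q := rfl

/-- Turn the matrix coefficient into an honest matrix entry. -/
lemma corner_exists {Γ ι : Type*} [Group Γ] (ℓ : Γ → ℕ) [Fintype ι] [DecidableEq ι]
    (R : Γ →* Matrix ι ι ℝ) (f v : ι → ℝ) (a c K : ℝ) (h : Good ℓ R f v a c K) (b : Bool) :
    ∃ (M : Γ →* Matrix (ι ⊕ Bool) (ι ⊕ Bool) ℝ) (c' K' : ℝ), 0 < c' ∧ 0 < K' ∧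
      ∀ γ, 0 < nrm (M γ) ∧ nrm (wd (M γ)) ≤ K' * exp (-(a * ℓ γ)) * nrm (M γ) ^ 2 ∧
        (γ ≠ 1 → c' * nrm (M γ) ≤ |M γ (Sum.inr (!b)) (Sum.inr b)|) := by
  obtain ⟨c1, K1, ha, hc1, hK1, h4, h5, h6⟩ := good_pad (κ := Bool) ℓ R f v a c K h
  set U : Matrix ι Bool ℝ := vecMulVec v (Pi.single b 1) with hU
  set V : Matrix Bool ι ℝ := vecMulVec (Pi.single (!b) 1) f with hV
  have hUV : U * V = 0 := by
    rw [hU, hV, vecMulVec_mul_vecMulVec]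
    simp
  set Q : Matrix (ι ⊕ Bool) (ι ⊕ Bool) ℝ := fromBlocks 1 U (-V) 1 with hQ
  set Q' : Matrix (ι ⊕ Bool) (ι ⊕ Bool) ℝ := fromBlocks 1 (-U) V (1 - V * U) with hQ'
  have hQQ : Q' * Q = 1 := by
    rw [hQ, hQ', fromBlocks_multiply, ← fromBlocks_one]
    congr 1
    · simp [hUV]
    · simp
    · simp [Matrix.sub_mul, Matrix.mul_assoc, hUV]
    · simp
  have hQQ2 : Q * Q' = 1 := mul_eq_one_comm.mp hQQ
  set A := dsum R (1 : Γ →* Matrix Bool Bool ℝ) with hA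
  set M := conjRep A Q' Q hQQ with hM
  have hMA : ∀ γ, M γ = Q' * A γ * Q := fun γ => rfl
  have hAM : ∀ γ, A γ = Q * M γ * Q' := by
    intro γ
    rw [hMA]
    calc A γ = 1 * A γ * 1 := by simp
      _ = _ := by rw [← hQQ2]; simp only [Matrix.mul_assoc]
  set q := nrm Q * nrm Q' with hq
  have hq0 : 0 ≤ q := mul_nonneg (nrm_nonneg _) (nrm_nonneg _)
  have n1 : ∀ γ, nrm (M γ) ≤ (q + 1) * nrm (A γ) := by
    intro γ
    rw [hMA]
    refine (nrm_mul3_le _ _ _).trans ?_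
    have := nrm_nonneg (A γ)
    calc nrm Q' * nrm (A γ) * nrm Q = q * nrm (A γ) := by rw [hq]; ring
      _ ≤ _ := by gcongr; linarith
  have n2 : ∀ γ, nrm (A γ) ≤ (q + 1) * nrm (M γ) := by
    intro γ
    have h7 := nrm_mul3_le Q (M γ) Q'
    rw [← hAM] at h7
    refine h7.trans ?_
    have := nrm_nonneg (M γ)
    calc nrm Q * nrm (M γ) * nrm Q' = q * nrm (M γ) := by rw [hq]; ring
      _ ≤ _ := by gcongr; linarith
  set q2 := nrm (wd Q') * nrm (wd Q) with hq2
  have hq20 : 0 ≤ q2 := mul_nonneg (nrm_nonneg _) (nrm_nonneg _)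
  have n3 : ∀ γ, nrm (wd (M γ)) ≤ q2 * nrm (wd (A γ)) := by
    intro γ
    rw [hMA]
    exact nrm_wd_conj_le _ _ _
  refine ⟨M, c1 / (q + 1), (q2 + 1) * K1 * (q + 1) ^ 2, by positivity, by positivity, ?_⟩
  intro γ
  refine ⟨?_, ?_, ?_⟩
  · have h7 := h5 γ
    have h8 : 0 < c1 * exp (a * ℓ γ) := by positivity
    have h9 := n2 γ
    have : 0 < (q + 1) * nrm (M γ) := by linarith
    exact (mul_pos_iff_of_pos_left (by positivity)).mp this
  · have p1 := nrm_nonneg (A γ)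
    have p2 := nrm_nonneg (M γ)
    calc nrm (wd (M γ)) ≤ q2 * nrm (wd (A γ)) := n3 γ
      _ ≤ (q2 + 1) * (K1 * exp (-(a * ℓ γ)) * ((q + 1) * nrm (M γ)) ^ 2) := by
        have r1 := h4 γ
        have r2 := n2 γ
        refine mul_le_mul (by linarith) (r1.trans ?_) (nrm_nonneg _) (by linarith)
        gcongr
      _ = _ := by ring
  · intro hγ
    have key : M γ (Sum.inr (!b)) (Sum.inr b) = f ⬝ᵥ (R γ *ᵥ v) - f ⬝ᵥ v := by
      have e : M γ = fromBlocks (R γ + U * V) (R γ * U - U) (V * R γ - (1 - V * U) * V)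
          (V * R γ * U + (1 - V * U)) := by
        rw [hMA, hQ, hQ', hA, dsum_apply, fromBlocks_multiply, fromBlocks_multiply]
        congr 1 <;> simp [sub_eq_add_neg]
      rw [e, fromBlocks_apply₂₂]
      have e1 : V * U = (f ⬝ᵥ v) • vecMulVec (Pi.single (!b) 1) (Pi.single b 1) := by
        rw [hU, hV, vecMulVec_mul_vecMulVec]
        ext i j
        simp only [vecMulVec_apply, Pi.smul_apply, Matrix.smul_apply, smul_eq_mul]
        ring
      have e2 : V * R γ * U = (f ⬝ᵥ (R γ *ᵥ v)) •
          vecMulVec (Pi.single (!b) 1) (Pi.single b 1) := by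
        rw [hU, hV, Matrix.mul_assoc, mul_vecMulVec, vecMulVec_mul_vecMulVec]
        ext i j
        simp only [vecMulVec_apply, Pi.smul_apply, Matrix.smul_apply, smul_eq_mul]
        ring
      rw [e1, e2]
      simp [vecMulVec_apply, Matrix.one_apply, sub_eq_add_neg]
    have e1 := dsum_coeff R (1 : Γ →* Matrix Bool Bool ℝ) 1 f v 0 0
    rw [map_one, one_mulVec] at e1
    have h7 := h6 γ hγ
    rw [e1, hA, dsum_coeff, map_one, one_mulVec] at h7
    simp only [zero_dotProduct, add_zero] at h7
    rw [key]
    refine le_trans ?_ h7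
    rw [div_mul_eq_mul_div, div_le_iff₀ (by positivity)]
    have := n1 γ
    calc c1 * nrm (M γ) ≤ c1 * ((q + 1) * nrm (A γ)) := by gcongr
      _ = _ := by ring

end FPA

namespace FPA

open Real

lemma pp_exists {Γ ι : Type*} [Group Γ] (ℓ : Γ → ℕ) [Fintype ι] [DecidableEq ι]
    (R : Γ →* Matrix ι ι ℝ) (f v : ι → ℝ) (a c K : ℝ) (h : Good ℓ R f v a c K) (b : Bool)
    (δ η : ℝ) (hδ : 0 < δ) (hη : 0 < η) :
    ∃ M : Γ →* Matrix (ι ⊕ Bool) (ι ⊕ Bool) ℝ, ∀ γ, γ ≠ 1 → ∃ p : ℝ, 0 < p ∧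
      p ≤ |M γ (Sum.inr (!b)) (Sum.inr b)| ∧
      (∀ i j, ¬ (i = Sum.inr (!b) ∧ j = Sum.inr b) → |M γ i j| ≤ δ * p) ∧
      nrm (wd (M γ)) ≤ η * exp (-(a * ℓ γ)) * p ^ 2 := by
  obtain ⟨M0, c', K', hc', hK', H⟩ := corner_exists ℓ R f v a c K h b
  set t : ℝ := 1 + 1 / (δ * c') + K' / (η * c' ^ 2) with ht
  have z1 : 0 < 1 / (δ * c') := by positivity
  have z2 : 0 < K' / (η * c' ^ 2) := by positivity
  have ht1 : 1 ≤ t := by linarith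
  have ht0 : 0 < t := by linarith
  have htδ : 1 ≤ δ * t * c' := by
    have : 1 / (δ * c') ≤ t := by linarith
    rw [div_le_iff₀ (by positivity)] at this
    linarith
  have htη : K' ≤ η * t ^ 2 * c' ^ 2 := by
    have : K' / (η * c' ^ 2) ≤ t ^ 2 := by nlinarith
    rw [div_le_iff₀ (by positivity)] at this
    linarith
  set s : ι ⊕ Bool → ℝ := fun i => if i = Sum.inr b then t else if i = Sum.inr (!b) then t⁻¹ else 1
    with hs
  have hti : t⁻¹ ≤ 1 := inv_le_one_of_one_le₀ ht1
  have hti0 : 0 < t⁻¹ := by positivity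
  have s0 : ∀ i, 0 < s i := by
    intro i; simp only [hs]; split_ifs <;> linarith
  have s1 : ∀ i, i ≠ Sum.inr b → s i ≤ 1 := by
    intro i hi; simp only [hs, if_neg hi]; split_ifs <;> linarith
  have s2 : ∀ i, s i ≤ t := by
    intro i; simp only [hs]; split_ifs <;> linarith
  have s3 : ∀ i, i ≠ Sum.inr (!b) → (s i)⁻¹ ≤ 1 := by
    intro i hi; simp only [hs, if_neg hi]; split_ifs
    · exact hti
    · simp
  have s4 : ∀ i, (s i)⁻¹ ≤ t := by
    intro i
    by_cases hi : i = Sum.inr (!b)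
    · subst hi
      have : (Sum.inr (!b) : ι ⊕ Bool) ≠ Sum.inr b := by simp
      simp [hs]
    · exact (s3 i hi).trans ht1
  have si0 : ∀ i, 0 < (s i)⁻¹ := fun i => inv_pos.mpr (s0 i)
  have hSS : diagonal (fun i => (s i)⁻¹) * diagonal s = 1 := by
    rw [diagonal_mul_diagonal, ← diagonal_one]
    congr 1
    funext i
    exact inv_mul_cancel₀ (s0 i).ne'
  set M := conjRep M0 (diagonal fun i => (s i)⁻¹) (diagonal s) hSS with hM
  have hMe : ∀ γ i j, M γ i j = (s i)⁻¹ * M0 γ i j * s j := by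
    intro γ i j
    rw [hM, conjRep_apply, mul_diagonal, diagonal_mul]
  refine ⟨M, fun γ hγ => ?_⟩
  obtain ⟨hn0, hw, hcor⟩ := H γ
  replace hcor := hcor hγ
  set n := nrm (M0 γ) with hn
  refine ⟨t ^ 2 * c' * n, by positivity, ?_, ?_, ?_⟩
  · rw [hMe, abs_mul, abs_mul]
    have e1 : s (Sum.inr (!b)) = t⁻¹ := by simp [hs]
    have e2 : s (Sum.inr b) = t := by simp [hs]
    rw [e1, e2, inv_inv, abs_of_pos ht0]
    calc t ^ 2 * c' * n = t * (c' * n) * t := by ring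
      _ ≤ _ := by gcongr
  · intro i j hij
    rw [hMe, abs_mul, abs_mul, abs_of_pos (si0 i), abs_of_pos (s0 j)]
    have b1 : (s i)⁻¹ * s j ≤ t := by
      by_cases hi : i = Sum.inr (!b)
      · have hj : j ≠ Sum.inr b := fun hj => hij ⟨hi, hj⟩
        calc (s i)⁻¹ * s j ≤ t * 1 := mul_le_mul (s4 i) (s1 j hj) (s0 j).le ht0.le
          _ = t := mul_one t
      · calc (s i)⁻¹ * s j ≤ 1 * t := mul_le_mul (s3 i hi) (s2 j) (s0 j).le one_pos.le
          _ = t := one_mul t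
    have b2 : |M0 γ i j| ≤ n := abs_le_nrm _ _ _
    calc (s i)⁻¹ * |M0 γ i j| * s j = ((s i)⁻¹ * s j) * |M0 γ i j| := by ring
      _ ≤ t * n := mul_le_mul b1 b2 (abs_nonneg _) ht0.le
      _ = 1 * (t * n) := by ring
      _ ≤ (δ * t * c') * (t * n) := by gcongr
      _ = _ := by ring
  · have b1 : nrm (wd (M γ)) ≤ t ^ 2 * nrm (wd (M0 γ)) := by
      have : nrm (wd (M γ)) ≤ nrm (t ^ 2 • wd (M0 γ)) := by
        unfold nrm
        refine Finset.sum_le_sum fun p _ => Finset.sum_le_sum fun q _ => ?_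
        obtain ⟨i, i'⟩ := p
        obtain ⟨j, j'⟩ := q
        rw [Matrix.smul_apply, smul_eq_mul, abs_mul, abs_of_pos (by positivity : 0 < t ^ 2)]
        by_cases hii : i = i'
        · subst hii
          have e1 : wd (M γ) (i, i) (j, j') = 0 := by simp only [wd]; ring
          rw [e1, abs_zero]; positivity
        by_cases hjj : j = j'
        · subst hjj
          have e1 : wd (M γ) (i, i') (j, j) = 0 := by simp only [wd]; ring
          rw [e1, abs_zero]; positivity
        have e1 : wd (M γ) (i, i') (j, j') = (((s i)⁻¹ * (s i')⁻¹) * (s j * s j')) *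
            wd (M0 γ) (i, i') (j, j') := by
          simp only [wd, hMe]; ring
        have c1 : (s i)⁻¹ * (s i')⁻¹ ≤ t := by
          by_cases hi : i = Sum.inr (!b)
          · have hi' : i' ≠ Sum.inr (!b) := fun h' => hii (hi.trans h'.symm)
            calc (s i)⁻¹ * (s i')⁻¹ ≤ t * 1 := mul_le_mul (s4 i) (s3 i' hi') (si0 i').le ht0.le
              _ = t := mul_one t
          · calc (s i)⁻¹ * (s i')⁻¹ ≤ 1 * t := mul_le_mul (s3 i hi) (s4 i') (si0 i').le one_pos.le
              _ = t := one_mul t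
        have c2 : s j * s j' ≤ t := by
          by_cases hj : j = Sum.inr b
          · have hj' : j' ≠ Sum.inr b := fun h' => hjj (hj.trans h'.symm)
            calc s j * s j' ≤ t * 1 := mul_le_mul (s2 j) (s1 j' hj') (s0 j').le ht0.le
              _ = t := mul_one t
          · calc s j * s j' ≤ 1 * t := mul_le_mul (s1 j hj) (s2 j') (s0 j').le one_pos.le
              _ = t := one_mul t
        have p1 : 0 < (s i)⁻¹ * (s i')⁻¹ := mul_pos (si0 i) (si0 i')
        have p2 : 0 < s j * s j' := mul_pos (s0 j) (s0 j')
        rw [e1, abs_mul, abs_of_pos (mul_pos p1 p2)]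
        refine mul_le_mul_of_nonneg_right ?_ (abs_nonneg _)
        rw [sq]
        exact mul_le_mul c1 c2 p2.le ht0.le
      rwa [nrm_smul, abs_of_pos (by positivity : 0 < t ^ 2)] at this
    calc nrm (wd (M γ)) ≤ t ^ 2 * nrm (wd (M0 γ)) := b1
      _ ≤ t ^ 2 * (K' * exp (-(a * ℓ γ)) * n ^ 2) := by gcongr
      _ ≤ t ^ 2 * ((η * t ^ 2 * c' ^ 2) * exp (-(a * ℓ γ)) * n ^ 2) := by gcongr
      _ = _ := by ring

/-- Alternating products of syllables, with the total length recorded. -/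
inductive Alt {G : Type*} [Group G] (Syl : Bool → ℕ → G → Prop) : Bool → ℕ → G → Prop
  | single {b : Bool} {n : ℕ} {x : G} : Syl b n x → Alt Syl b n x
  | cons {b : Bool} {n m : ℕ} {x w : G} : Syl b n x → Alt Syl (!b) m w → Alt Syl b (n + m) (x * w)

lemma alt_estimate {G ι : Type*} [Group G] [Fintype ι] [DecidableEq ι]
    (Syl : Bool → ℕ → G → Prop) (ρ : G →* Matrix (ι ⊕ Bool) (ι ⊕ Bool) ℝ) (a δ η : ℝ)
    (hδ : 0 < δ)
    (hδ2 : (Fintype.card (ι ⊕ Bool) : ℝ) * δ ≤ 1 / 2) (hη : 0 < η) (hη2 : η ≤ 1 / 4)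
    (H : ∀ b n x, Syl b n x → ∃ p : ℝ, 0 < p ∧
      p ≤ |ρ x (Sum.inr (!b)) (Sum.inr b)| ∧
      (∀ i j, ¬ (i = Sum.inr (!b) ∧ j = Sum.inr b) → |ρ x i j| ≤ δ * p) ∧
      nrm (wd (ρ x)) ≤ η * exp (-(a * n)) * p ^ 2) {b : Bool} {n : ℕ} {w : G} (hw : Alt Syl b n w) :
    ∃ (j0 : ι ⊕ Bool) (q : ℝ), 0 < q ∧ (∀ j, |ρ w j j0| ≤ |ρ w (Sum.inr (!b)) j0|) ∧
      q ≤ |ρ w (Sum.inr (!b)) j0| ∧ nrm (wd (ρ w)) ≤ η * exp (-(a * n)) * q ^ 2 := by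
  have hcard : (1 : ℝ) ≤ Fintype.card (ι ⊕ Bool) := by
    have : Nonempty (ι ⊕ Bool) := ⟨Sum.inr true⟩
    exact_mod_cast Fintype.card_pos
  have hδ1 : δ ≤ 1 := by nlinarith
  induction hw with
  | @single b n x hx =>
    obtain ⟨p, hp, h1, h2, h3⟩ := H b n x hx
    refine ⟨Sum.inr b, p, hp, fun j => ?_, h1, h3⟩
    by_cases hj : j = Sum.inr (!b)
    · rw [hj]
    · refine (h2 j _ fun h' => hj h'.1).trans (le_trans ?_ h1)
      exact mul_le_of_le_one_left hp.le hδ1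
  | @cons b n m x w hx _ ih =>
    obtain ⟨p, hp, h1, h2, h3⟩ := H b n x hx
    obtain ⟨j0, q, hq, k1, k2, k3⟩ := ih
    rw [Bool.not_not] at k1 k2
    set Y := |ρ w (Sum.inr b) j0| with hY
    have hY0 : 0 < Y := lt_of_lt_of_le hq k2
    have hmul : ∀ i, ρ (x * w) i j0 = ∑ j, ρ x i j * ρ w j j0 := by
      intro i; rw [map_mul, Matrix.mul_apply]
    have hsmall : (Fintype.card (ι ⊕ Bool) : ℝ) * (δ * p * Y) ≤ p * Y / 2 := by
      have : (Fintype.card (ι ⊕ Bool) : ℝ) * δ * (p * Y) ≤ 1 / 2 * (p * Y) := by gcongr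
      linarith
    have hdp : 0 ≤ δ * p * Y := by positivity
    have hoff : ∀ i, i ≠ Sum.inr (!b) → |ρ (x * w) i j0| ≤ p * Y / 2 := by
      intro i hi
      refine le_trans ?_ hsmall
      rw [hmul]
      refine (Finset.abs_sum_le_sum_abs _ _).trans ?_
      have : ∑ j, |ρ x i j * ρ w j j0| ≤ ∑ j : ι ⊕ Bool, δ * p * Y := by
        refine Finset.sum_le_sum fun j _ => ?_
        rw [abs_mul]
        exact mul_le_mul (h2 i j fun h' => hi h'.1) (k1 j) (abs_nonneg _) (by positivity)
      refine this.trans (le_of_eq ?_)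
      rw [Finset.sum_const, nsmul_eq_mul, Finset.card_univ]
    have hon : p * Y / 2 ≤ |ρ (x * w) (Sum.inr (!b)) j0| := by
      rw [hmul, ← Finset.add_sum_erase _ _ (Finset.mem_univ (Sum.inr b : ι ⊕ Bool))]
      have e1 : |∑ j ∈ Finset.univ.erase (Sum.inr b : ι ⊕ Bool),
          ρ x (Sum.inr (!b)) j * ρ w j j0| ≤ p * Y / 2 := by
        refine le_trans ?_ hsmall
        refine (Finset.abs_sum_le_sum_abs _ _).trans ?_
        have : ∑ j ∈ Finset.univ.erase (Sum.inr b : ι ⊕ Bool),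
            |ρ x (Sum.inr (!b)) j * ρ w j j0| ≤
            ∑ j ∈ Finset.univ.erase (Sum.inr b : ι ⊕ Bool), δ * p * Y := by
          refine Finset.sum_le_sum fun j hj => ?_
          rw [abs_mul]
          exact mul_le_mul (h2 _ j fun h' => (Finset.mem_erase.mp hj).1 h'.2) (k1 j)
            (abs_nonneg _) (by positivity)
        refine this.trans ?_
        rw [Finset.sum_const, nsmul_eq_mul]
        refine mul_le_mul_of_nonneg_right ?_ hdp
        exact_mod_cast Finset.card_le_univ _
      have e2 : p * Y ≤ |ρ x (Sum.inr (!b)) (Sum.inr b) * ρ w (Sum.inr b) j0| := by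
        rw [abs_mul]
        gcongr
      have e3 := abs_sub_abs_le_abs_add (ρ x (Sum.inr (!b)) (Sum.inr b) * ρ w (Sum.inr b) j0)
        (∑ j ∈ Finset.univ.erase (Sum.inr b : ι ⊕ Bool), ρ x (Sum.inr (!b)) j * ρ w j j0)
      linarith
    refine ⟨j0, p * q / 2, by positivity, fun j => ?_, ?_, ?_⟩
    · by_cases hj : j = Sum.inr (!b)
      · rw [hj]
      · exact (hoff j hj).trans hon
    · refine le_trans ?_ hon
      gcongr
    · rw [map_mul]
      refine (nrm_wd_mul_le _ _).trans ?_
      calc nrm (wd (ρ x)) * nrm (wd (ρ w))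
          ≤ (η * exp (-(a * n)) * p ^ 2) * (η * exp (-(a * m)) * q ^ 2) :=
            mul_le_mul h3 k3 (nrm_nonneg _) (by positivity)
        _ = (4 * η) * (η * exp (-(a * ((n + m : ℕ) : ℝ))) * (p * q / 2) ^ 2) := by
            rw [show -(a * ((n + m : ℕ) : ℝ)) = -(a * n) + -(a * m) by push_cast; ring, Real.exp_add]
            ring
        _ ≤ 1 * (η * exp (-(a * ((n + m : ℕ) : ℝ))) * (p * q / 2) ^ 2) := by
            gcongr
            linarith
        _ = _ := one_mul _

end FPA

namespace FPA

open Real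

lemma nrm_one_fin (d : ℕ) : nrm (1 : Matrix (Fin d) (Fin d) ℝ) = d := by
  simp only [nrm, one_apply, apply_ite abs, abs_one, abs_zero]
  simp

/-- The scaling character making the Kronecker square unimodular. -/
noncomputable def scl {κ : Type*} [Fintype κ] [DecidableEq κ] (A : Matrix κ κ ℝ) : ℝ :=
  |A.det| ^ (-(2 / (Fintype.card κ : ℝ)))

lemma scl_pos {κ : Type*} [Fintype κ] [DecidableEq κ] (A : Matrix κ κ ℝ) (h : A.det ≠ 0) :
    0 < scl A := rpow_pos_of_pos (abs_pos.mpr h) _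

lemma scl_mul {κ : Type*} [Fintype κ] [DecidableEq κ] (A B : Matrix κ κ ℝ) :
    scl (A * B) = scl A * scl B := by
  unfold scl
  rw [det_mul, abs_mul, mul_rpow (abs_nonneg _) (abs_nonneg _)]

lemma scl_one {κ : Type*} [Fintype κ] [DecidableEq κ] : scl (1 : Matrix κ κ ℝ) = 1 := by
  simp [scl]

lemma scl_det {κ : Type*} [Fintype κ] [DecidableEq κ] [Nonempty κ] (A : Matrix κ κ ℝ)
    (h : A.det ≠ 0) :
    (scl A • (kroneckerMap (· * ·) A A : Matrix (κ × κ) (κ × κ) ℝ)).det = 1 := by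
  have hk : (kroneckerMap (· * ·) A A : Matrix (κ × κ) (κ × κ) ℝ).det =
      A.det ^ Fintype.card κ * A.det ^ Fintype.card κ := det_kronecker A A
  rw [det_smul, hk, Fintype.card_prod]
  have hN : (0 : ℝ) < Fintype.card κ := by exact_mod_cast Fintype.card_pos
  have hpos := abs_pos.mpr h
  have e1 : scl A ^ (Fintype.card κ * Fintype.card κ) = (|A.det| ^ (2 * Fintype.card κ))⁻¹ := by
    unfold scl
    rw [← rpow_natCast, ← rpow_mul hpos.le, ← rpow_natCast, ← rpow_neg hpos.le]
    congr 1
    push_cast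
    field_simp
  rw [e1, (even_two_mul _).pow_abs, ← pow_add, ← two_mul, inv_mul_cancel₀ (pow_ne_zero _ h)]

lemma final_step {G κ : Type*} [Group G] [Fintype κ] [DecidableEq κ] (ρ : G →* Matrix κ κ ℝ)
    (hκ : 2 ≤ Fintype.card κ) (len : G → ℕ) (hone : len 1 = 0) (hinv : ∀ w, len w⁻¹ = len w)
    (a : ℝ) (ha : 0 < a)
    (H : ∀ w, w ≠ 1 → nrm (wd (ρ w)) ≤
      1 / (4 * (Fintype.card κ : ℝ) ^ 12) * exp (-(a * len w)) * nrm (ρ w) ^ 2) :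
    ∃ (d : ℕ) (r : G →* Matrix.SpecialLinearGroup (Fin d) ℝ), Function.Injective r ∧
      ∃ C' : ℝ, 0 < C' ∧ ∀ w : G,
        (a * (len w) - C' ≤ log (sval ((r w : Matrix (Fin d) (Fin d) ℝ)) 1) -
          log (sval ((r w : Matrix (Fin d) (Fin d) ℝ)) 2)) ∧
        (a * (len w) - C' ≤ log (sval ((r w : Matrix (Fin d) (Fin d) ℝ)) (d - 1)) -
          log (sval ((r w : Matrix (Fin d) (Fin d) ℝ)) d)) := by
  have : Nonempty κ := Fintype.card_pos_iff.mp (by omega)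
  set N : ℝ := (Fintype.card κ : ℝ) with hN
  have hN1 : 1 ≤ N := by rw [hN]; exact_mod_cast (by omega : 1 ≤ Fintype.card κ)
  have hdet : ∀ w, (ρ w).det ≠ 0 := by
    intro w h0
    have : (ρ (w * w⁻¹)).det = 1 := by rw [mul_inv_cancel, map_one, det_one]
    rw [map_mul, det_mul, h0, zero_mul] at this
    exact zero_ne_one this
  set d := Fintype.card (κ × κ) with hd
  have hdN : (d : ℝ) = N ^ 2 := by rw [hd, Fintype.card_prod, hN]; push_cast; ring
  have hd2 : 2 ≤ d := by rw [hd, Fintype.card_prod]; nlinarith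
  set e : Fin d ≃ κ × κ := (Fintype.equivFin (κ × κ)).symm with he
  set B : G → Matrix (Fin d) (Fin d) ℝ := fun w => (scl (ρ w) • krSq ρ w).submatrix e e with hB
  have hB1 : ∀ w, (B w).det = 1 := by
    intro w
    rw [hB]
    simp only [det_submatrix_equiv_self]
    exact scl_det (ρ w) (hdet w)
  have hBone : B 1 = 1 := by
    simp only [hB, map_one, scl_one, one_smul, submatrix_one_equiv]
  have hBmul : ∀ x y, B (x * y) = B x * B y := by
    intro x y
    simp only [hB, map_mul, scl_mul]
    rw [submatrix_mul_equiv, Matrix.smul_mul, Matrix.mul_smul, smul_smul]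
  let r : G →* Matrix.SpecialLinearGroup (Fin d) ℝ :=
    { toFun := fun w => ⟨B w, hB1 w⟩
      map_one' := Subtype.ext hBone
      map_mul' := fun x y => Subtype.ext (hBmul x y) }
  have hr : ∀ w, (r w : Matrix (Fin d) (Fin d) ℝ) = B w := fun w => rfl
  have hBn : ∀ w, nrm (B w) = scl (ρ w) * nrm (krSq ρ w) := by
    intro w
    simp only [hB]
    rw [nrm_submatrix, nrm_smul, abs_of_pos (scl_pos _ (hdet w))]
  have hBw : ∀ w, nrm (wd (B w)) = scl (ρ w) ^ 2 * nrm (wd (krSq ρ w)) := by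
    intro w
    simp only [hB]
    rw [nrm_wd_submatrix, nrm_wd_smul]
  have hmain : ∀ w, w ≠ 1 → nrm (wd (B w)) ≤ 1 / (2 * N ^ 4) * exp (-(a * len w)) * nrm (B w) ^ 2 := by
    intro w hw
    have h1 := krSq_gap ρ w _ (H w hw)
    rw [hBw, hBn]
    calc scl (ρ w) ^ 2 * nrm (wd (krSq ρ w)) ≤ scl (ρ w) ^ 2 * (2 * N ^ 8 *
          (1 / (4 * N ^ 12) * exp (-(a * len w))) * nrm (krSq ρ w) ^ 2) := by gcongr
      _ = _ := by field_simp; ring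
  have hK : ∀ w, nrm (wd (B w)) ≤ 2 * exp (-(a * len w)) * nrm (B w) ^ 2 := by
    intro w
    by_cases hw : w = 1
    · rw [hw, hone]
      have := nrm_wd_le (B 1)
      simpa using this
    · refine (hmain w hw).trans ?_
      gcongr
      rw [div_le_iff₀ (by positivity)]
      have : 1 ≤ N ^ 4 := one_le_pow₀ hN1
      linarith
  refine ⟨d, r, ?_, log (4 * (d : ℝ) ^ 20 * 2), ?_, ?_⟩
  · rw [injective_iff_map_eq_one]
    intro w hw
    by_contra hne
    have hBw1 : B w = 1 := by rw [← hr, hw]; rfl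
    have h1 := hmain w hne
    rw [hBw1, nrm_one_fin, hdN] at h1
    have h2 : (1 : ℝ) ≤ nrm (wd (1 : Matrix (Fin d) (Fin d) ℝ)) := by
      have h3 := abs_le_nrm (wd (1 : Matrix (Fin d) (Fin d) ℝ)) (⟨0, by omega⟩, ⟨1, by omega⟩)
        (⟨0, by omega⟩, ⟨1, by omega⟩)
      simpa [wd, one_apply] using h3
    have h4 : exp (-(a * len w)) ≤ 1 := by
      rw [exp_le_one_iff]
      have : 0 ≤ a * len w := by positivity
      linarith
    have h5 : 1 / (2 * N ^ 4) * exp (-(a * len w)) * (N ^ 2) ^ 2 ≤ 1 / (2 * N ^ 4) * 1 * (N ^ 2) ^ 2 := by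
      gcongr
    have h6 : 1 / (2 * N ^ 4) * 1 * (N ^ 2) ^ 2 = 1 / 2 := by field_simp
    linarith
  · apply log_pos
    have : (1 : ℝ) ≤ (d : ℝ) ^ 20 := one_le_pow₀ (by exact_mod_cast (by omega : 1 ≤ d))
    linarith
  · intro w
    rw [hr]
    have hdw : (B w).det ≠ 0 := by rw [hB1]; exact one_ne_zero
    refine ⟨log_gap_first (B w) hdw hd2 2 (a * len w) two_pos (hK w), ?_⟩
    refine log_gap_last (B w) (B w⁻¹) hdw ?_ hd2 2 (a * len w) two_pos ?_
    · rw [← hBmul, inv_mul_cancel, hBone]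
    · have := hK w⁻¹
      rwa [hinv] at this

end FPA

namespace FPA

open Real

section words
variable {G : Type*} [Group G]

lemma wl_le (S : Set G) (l : List G) (h : ∀ g ∈ l, g ∈ S ∨ g⁻¹ ∈ S) :
    wordLength S l.prod ≤ l.length := Nat.sInf_le ⟨l, rfl, h, rfl⟩

lemma exists_word (S : Set G) (γ : G) (h : γ ∈ Subgroup.closure S) :
    ∃ l : List G, (∀ g ∈ l, g ∈ S ∨ g⁻¹ ∈ S) ∧ l.prod = γ := by
  rw [← Subgroup.mem_toSubmonoid, Subgroup.closure_toSubmonoid] at h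
  obtain ⟨l, h1, h2⟩ := Submonoid.exists_list_of_mem_closure h
  exact ⟨l, fun g hg => h1 g hg, h2⟩

lemma wl_spec (S : Set G) (γ : G) (h : γ ∈ Subgroup.closure S) :
    ∃ l : List G, l.length = wordLength S γ ∧ (∀ g ∈ l, g ∈ S ∨ g⁻¹ ∈ S) ∧ l.prod = γ := by
  obtain ⟨l, h1, h2⟩ := exists_word S γ h
  exact Nat.sInf_mem (s := {n | ∃ w : List G, w.length = n ∧ (∀ g ∈ w, g ∈ S ∨ g⁻¹ ∈ S) ∧
    w.prod = γ}) ⟨l.length, l, rfl, h1, h2⟩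

lemma wl_one (S : Set G) : wordLength S 1 = 0 := by
  have := wl_le S [] (by simp)
  simpa using this

lemma wl_mul_le (S : Set G) (x y : G) (hx : x ∈ Subgroup.closure S) (hy : y ∈ Subgroup.closure S) :
    wordLength S (x * y) ≤ wordLength S x + wordLength S y := by
  obtain ⟨l, h1, h2, h3⟩ := wl_spec S x hx
  obtain ⟨m, k1, k2, k3⟩ := wl_spec S y hy
  have := wl_le S (l ++ m) (by
    intro g hg
    rcases List.mem_append.mp hg with hg | hg
    · exact h2 g hg
    · exact k2 g hg)
  rw [List.prod_append, List.length_append, h3, k3, h1, k1] at this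
  exact this

lemma wl_inv_le (S : Set G) (x : G) (hx : x ∈ Subgroup.closure S) :
    wordLength S x⁻¹ ≤ wordLength S x := by
  obtain ⟨l, h1, h2, h3⟩ := wl_spec S x hx
  have := wl_le S (l.map (fun g => g⁻¹)).reverse (by
    intro g hg
    simp only [List.mem_reverse, List.mem_map] at hg
    obtain ⟨g', hg', rfl⟩ := hg
    rw [inv_inv]
    exact (h2 g' hg').symm)
  rw [← List.prod_inv_reverse, List.length_reverse, List.length_map, h3, h1] at this
  exact this

lemma wl_inv (S : Set G) (x : G) (hx : x ∈ Subgroup.closure S) :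
    wordLength S x⁻¹ = wordLength S x := by
  refine le_antisymm (wl_inv_le S x hx) ?_
  have := wl_inv_le S x⁻¹ (inv_mem hx)
  rwa [inv_inv] at this

lemma words_finite (S : Set G) (hS : S.Finite) (n : ℕ) :
    {γ : G | ∃ l : List G, l.length = n ∧ (∀ g ∈ l, g ∈ S ∨ g⁻¹ ∈ S) ∧ l.prod = γ}.Finite := by
  induction n with
  | zero =>
    refine (Set.finite_singleton (1 : G)).subset ?_
    rintro γ ⟨l, h1, -, rfl⟩
    rw [List.length_eq_zero_iff.mp h1]
    simp
  | succ n ih =>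
    have hU : (S ∪ S⁻¹).Finite := hS.union hS.inv
    refine (Set.Finite.image2 (fun x y => x * y) hU ih).subset ?_
    rintro γ ⟨l, h1, h2, rfl⟩
    match l, h1 with
    | x :: l, h1 =>
      refine ⟨x, h2 x (by simp), l.prod, ⟨l, by simpa using h1, fun g hg => h2 g (by simp [hg]),
        rfl⟩, by simp⟩

lemma ball_finite (S : Set G) (hS : S.Finite) (L : ℕ) :
    {γ : G | γ ∈ Subgroup.closure S ∧ wordLength S γ ≤ L}.Finite := by
  refine ((Set.finite_Iic L).biUnion fun n _ => words_finite S hS n).subset ?_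
  rintro γ ⟨h1, h2⟩
  obtain ⟨l, k1, k2, k3⟩ := wl_spec S γ h1
  simp only [Set.mem_iUnion]
  exact ⟨wordLength S γ, h2, l, k1, k2, k3⟩

lemma growth (S : Set G) (hS : S.Finite) {ι : Type*} [Fintype ι] [DecidableEq ι]
    (r : G →* Matrix ι ι ℝ) : ∃ B b : ℝ, 0 < B ∧ 0 ≤ b ∧
      ∀ γ ∈ Subgroup.closure S, nrm (r γ) ≤ B * exp (b * wordLength S γ) := by
  have hU : (S ∪ S⁻¹).Finite := hS.union hS.inv
  obtain ⟨D, hD⟩ := (hU.image (fun g => nrm (r g))).bddAbove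
  set D' := max D 1 with hD'
  have hD1 : 1 ≤ D' := le_max_right _ _
  have key : ∀ l : List G, (∀ g ∈ l, g ∈ S ∨ g⁻¹ ∈ S) →
      nrm (r l.prod) ≤ (nrm (1 : Matrix ι ι ℝ) + 1) * D' ^ l.length := by
    intro l
    induction l with
    | nil => intro _; simp
    | cons x l ih =>
      intro h
      have h1 := ih fun g hg => h g (by simp [hg])
      have h2 : nrm (r x) ≤ D' := (hD ⟨x, h x (by simp), rfl⟩).trans (le_max_left _ _)
      rw [List.prod_cons, map_mul, List.length_cons]
      refine (nrm_mul_le _ _).trans ?_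
      have := nrm_nonneg (r x)
      calc nrm (r x) * nrm (r l.prod) ≤ D' * ((nrm (1 : Matrix ι ι ℝ) + 1) * D' ^ l.length) :=
            mul_le_mul h2 h1 (nrm_nonneg _) (by linarith)
        _ = _ := by ring
  have h1 : 0 ≤ nrm (1 : Matrix ι ι ℝ) := nrm_nonneg _
  refine ⟨nrm (1 : Matrix ι ι ℝ) + 1, log D', by linarith, log_nonneg hD1, ?_⟩
  intro γ hγ
  obtain ⟨l, k1, k2, k3⟩ := wl_spec S γ hγ
  have h2 := key l k2
  rw [k3, k1] at h2
  rw [mul_comm (log D'), Real.exp_nat_mul, exp_log (by linarith)]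
  exact h2

lemma word_hom {H : Type*} [Group H] (Γ : Subgroup G) (S : Set G) (T : Set H)
    (hS : Subgroup.closure S = Γ) (φ : Γ →* H) (hφ : ∀ g : Γ, (g : G) ∈ S → φ g ∈ T)
    (l : List G) : (∀ g ∈ l, g ∈ S ∨ g⁻¹ ∈ S) → ∀ γ : Γ, (γ : G) = l.prod →
      ∃ m : List H, m.length = l.length ∧ (∀ g ∈ m, g ∈ T ∨ g⁻¹ ∈ T) ∧ m.prod = φ γ := by
  induction l with
  | nil =>
    intro _ γ hγ
    have : γ = 1 := Subtype.ext (by simpa using hγ)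
    exact ⟨[], rfl, by simp, by simp [this]⟩
  | cons x l ih =>
    intro h γ hγ
    have hx := h x (by simp)
    have hxΓ : x ∈ Γ := by
      rw [← hS]
      rcases hx with hx | hx
      · exact Subgroup.subset_closure hx
      · exact inv_mem_iff.mp (Subgroup.subset_closure hx)
    set x' : Γ := ⟨x, hxΓ⟩ with hx'
    obtain ⟨m, h1, h2, h3⟩ := ih (fun g hg => h g (by simp [hg])) (x'⁻¹ * γ) (by
      simp [hγ, hx'])
    refine ⟨φ x' :: m, by simp [h1], ?_, by simp [h3]⟩
    intro g hg
    rcases List.mem_cons.mp hg with rfl | hg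
    · rcases hx with hx | hx
      · exact Or.inl (hφ x' hx)
      · refine Or.inr ?_
        rw [← map_inv]
        exact hφ x'⁻¹ hx
    · exact h2 g hg

lemma wl_hom_le {H : Type*} [Group H] (Γ : Subgroup G) (S : Set G) (T : Set H)
    (hS : Subgroup.closure S = Γ) (φ : Γ →* H) (hφ : ∀ g : Γ, (g : G) ∈ S → φ g ∈ T) (γ : Γ) :
    wordLength T (φ γ) ≤ wordLength S (γ : G) := by
  obtain ⟨l, k1, k2, k3⟩ := wl_spec S (γ : G) (by rw [hS]; exact γ.2)
  obtain ⟨m, h1, h2, h3⟩ := word_hom Γ S T hS φ hφ l k2 γ k3.symm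
  rw [← h3, ← k1, ← h1]
  exact wl_le T m h2

lemma mem_closure_hom {H : Type*} [Group H] (Γ : Subgroup G) (S : Set G) (T : Set H)
    (hS : Subgroup.closure S = Γ) (φ : Γ →* H) (hφ : ∀ g : Γ, (g : G) ∈ S → φ g ∈ T) (γ : Γ) :
    φ γ ∈ Subgroup.closure T := by
  obtain ⟨l, k1, k2, k3⟩ := wl_spec S (γ : G) (by rw [hS]; exact γ.2)
  obtain ⟨m, h1, h2, h3⟩ := word_hom Γ S T hS φ hφ l k2 γ k3.symm
  rw [← h3]
  refine list_prod_mem fun g hg => ?_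
  rcases h2 g hg with h | h
  · exact Subgroup.subset_closure h
  · exact inv_mem_iff.mp (Subgroup.subset_closure h)

end words

/-- The inclusion of `SL` into matrices. -/
def slHom (d : ℕ) : Matrix.SpecialLinearGroup (Fin d) ℝ →* Matrix (Fin d) (Fin d) ℝ where
  toFun g := (g : Matrix (Fin d) (Fin d) ℝ)
  map_one' := rfl
  map_mul' _ _ := rfl

lemma group_good {d : ℕ} (Γ : Subgroup (Matrix.SpecialLinearGroup (Fin d) ℝ))
    (S : Finset (Matrix.SpecialLinearGroup (Fin d) ℝ))
    (hS : Subgroup.closure (S : Set (Matrix.SpecialLinearGroup (Fin d) ℝ)) = Γ)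
    (θ : Finset ℕ) (hθ : θ.Nonempty) (hθ' : ∀ k ∈ θ, 1 ≤ k ∧ k ≤ d - 1)
    (a C : ℝ) (ha : 0 < a)
    (h : ∀ γ ∈ Γ, ∀ k ∈ θ,
      a * (wordLength (S : Set _) γ) - C ≤
        Real.log (sval (γ : Matrix (Fin d) (Fin d) ℝ) k) -
          Real.log (sval (γ : Matrix (Fin d) (Fin d) ℝ) (k + 1))) :
    ∃ (ι : Type) (_ : Fintype ι) (_ : DecidableEq ι) (R : Γ →* Matrix ι ι ℝ) (f v : ι → ℝ)
      (a' c K : ℝ), Good (fun γ : Γ => wordLength (S : Set _)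
        (γ : Matrix.SpecialLinearGroup (Fin d) ℝ)) R f v a' c K := by
  obtain ⟨k, hk⟩ := hθ
  obtain ⟨hk1, hk2⟩ := hθ' k hk
  have hkd : k < d := by omega
  have hd : (0 : ℝ) < d := by exact_mod_cast (by omega : 0 < d)
  set ℓ : Γ → ℕ := fun γ : Γ => wordLength (S : Set _)
    (γ : Matrix.SpecialLinearGroup (Fin d) ℝ) with hℓ
  set r : Γ →* Matrix (Fin d) (Fin d) ℝ := (slHom d).comp Γ.subtype with hr
  have hgap : GapRep ℓ (a / d) (a / d) := by
    refine gap_of_anosov ℓ r (fun γ => ?_) k hk1 hkd a C ha fun γ => ?_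
    · exact γ.1.2
    · exact h γ.1 γ.2 k hk
  obtain ⟨B, b, hB, hb, hg⟩ := growth (S : Set _) S.finite_toSet (slHom d)
  have hfin : ∀ L : ℕ, {γ | ℓ γ ≤ L}.Finite := by
    intro L
    have h1 := ball_finite (S : Set (Matrix.SpecialLinearGroup (Fin d) ℝ)) S.finite_toSet L
    refine (h1.preimage (f := fun γ : Γ => (γ : Matrix.SpecialLinearGroup (Fin d) ℝ))
      Subtype.val_injective.injOn).subset ?_
    intro γ hγ
    exact ⟨by rw [hS]; exact γ.2, hγ⟩
  have hinj : Function.Injective r := by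
    intro x y hxy
    exact Subtype.ext (Subtype.ext hxy)
  obtain ⟨ι, i1, i2, R, f, v, c, K, hgood⟩ := good_exists ℓ r hinj hfin B b hB hb
    (fun γ => hg γ.1 (by rw [hS]; exact γ.2)) (a / d) (a / d) (by positivity) (by positivity) hgap
  exact ⟨ι, i1, i2, R, f, v, a / d, c, K, hgood⟩

/-- Syllables of the free product. -/
def Syl {Γ₁ Γ₂ : Type*} [Group Γ₁] [Group Γ₂] (ℓ₁ : Γ₁ → ℕ) (ℓ₂ : Γ₂ → ℕ) (b : Bool) (n : ℕ)
    (x : Monoid.Coprod Γ₁ Γ₂) : Prop :=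
  (b = true ∧ ∃ g : Γ₁, g ≠ 1 ∧ n = ℓ₁ g ∧ x = Monoid.Coprod.inl g) ∨
  (b = false ∧ ∃ g : Γ₂, g ≠ 1 ∧ n = ℓ₂ g ∧ x = Monoid.Coprod.inr g)

lemma alt_exhaust {Γ₁ Γ₂ : Type*} [Group Γ₁] [Group Γ₂] (ℓ₁ : Γ₁ → ℕ) (ℓ₂ : Γ₂ → ℕ)
    (w : Monoid.Coprod Γ₁ Γ₂) : w = 1 ∨ ∃ b n, Alt (Syl ℓ₁ ℓ₂) b n w := by
  induction w using Monoid.Coprod.induction_on' with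
  | one => exact Or.inl rfl
  | inl_mul g x ih =>
    by_cases hg : g = 1
    · rw [hg, map_one, one_mul]; exact ih
    have hs : ∀ g : Γ₁, g ≠ 1 → Syl ℓ₁ ℓ₂ true (ℓ₁ g) (Monoid.Coprod.inl g) := fun g hg =>
      Or.inl ⟨rfl, g, hg, rfl, rfl⟩
    rcases ih with rfl | ⟨b, n, h⟩
    · rw [mul_one]; exact Or.inr ⟨true, _, Alt.single (hs g hg)⟩
    cases h with
    | single h =>
      rcases h with ⟨rfl, g', hg', -, rfl⟩ | ⟨rfl, h⟩
      · rw [← map_mul]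
        by_cases h1 : g * g' = 1
        · rw [h1, map_one]; exact Or.inl rfl
        · exact Or.inr ⟨true, _, Alt.single (hs _ h1)⟩
      · exact Or.inr ⟨true, _, Alt.cons (hs g hg) (Alt.single (Or.inr ⟨rfl, h⟩))⟩
    | cons h h' =>
      rcases h with ⟨rfl, g', hg', -, rfl⟩ | ⟨rfl, h⟩
      · rw [← mul_assoc, ← map_mul]
        by_cases h1 : g * g' = 1
        · rw [h1, map_one, one_mul]; exact Or.inr ⟨_, _, h'⟩
        · exact Or.inr ⟨true, _, Alt.cons (hs _ h1) h'⟩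
      · exact Or.inr ⟨true, _, Alt.cons (hs g hg) (Alt.cons (Or.inr ⟨rfl, h⟩) h')⟩
  | inr_mul g x ih =>
    by_cases hg : g = 1
    · rw [hg, map_one, one_mul]; exact ih
    have hs : ∀ g : Γ₂, g ≠ 1 → Syl ℓ₁ ℓ₂ false (ℓ₂ g) (Monoid.Coprod.inr g) := fun g hg =>
      Or.inr ⟨rfl, g, hg, rfl, rfl⟩
    rcases ih with rfl | ⟨b, n, h⟩
    · rw [mul_one]; exact Or.inr ⟨false, _, Alt.single (hs g hg)⟩
    cases h with
    | single h =>
      rcases h with ⟨rfl, h⟩ | ⟨rfl, g', hg', -, rfl⟩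
      · exact Or.inr ⟨false, _, Alt.cons (hs g hg) (Alt.single (Or.inl ⟨rfl, h⟩))⟩
      · rw [← map_mul]
        by_cases h1 : g * g' = 1
        · rw [h1, map_one]; exact Or.inl rfl
        · exact Or.inr ⟨false, _, Alt.single (hs _ h1)⟩
    | cons h h' =>
      rcases h with ⟨rfl, h⟩ | ⟨rfl, g', hg', -, rfl⟩
      · exact Or.inr ⟨false, _, Alt.cons (hs g hg) (Alt.cons (Or.inl ⟨rfl, h⟩) h')⟩
      · rw [← mul_assoc, ← map_mul]
        by_cases h1 : g * g' = 1
        · rw [h1, map_one, one_mul]; exact Or.inr ⟨_, _, h'⟩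
        · exact Or.inr ⟨false, _, Alt.cons (hs _ h1) h'⟩

lemma coprod_rep {Γ₁ Γ₂ : Type*} [Group Γ₁] [Group Γ₂] (ℓ₁ : Γ₁ → ℕ) (ℓ₂ : Γ₂ → ℕ)
    {ι₁ ι₂ : Type} [Fintype ι₁] [DecidableEq ι₁] [Fintype ι₂] [DecidableEq ι₂]
    (R₁ : Γ₁ →* Matrix ι₁ ι₁ ℝ) (f₁ v₁ : ι₁ → ℝ) (a₁ c₁ K₁ : ℝ) (h₁ : Good ℓ₁ R₁ f₁ v₁ a₁ c₁ K₁)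
    (R₂ : Γ₂ →* Matrix ι₂ ι₂ ℝ) (f₂ v₂ : ι₂ → ℝ) (a₂ c₂ K₂ : ℝ) (h₂ : Good ℓ₂ R₂ f₂ v₂ a₂ c₂ K₂) :
    ∃ (ρ : Monoid.Coprod Γ₁ Γ₂ →* Matrix ((ι₁ ⊕ ι₂) ⊕ Bool) ((ι₁ ⊕ ι₂) ⊕ Bool) ℝ) (a : ℝ), 0 < a ∧
      ∀ w, w ≠ 1 → ∃ b n, Alt (Syl ℓ₁ ℓ₂) b n w ∧ nrm (wd (ρ w)) ≤
        1 / (4 * (Fintype.card ((ι₁ ⊕ ι₂) ⊕ Bool) : ℝ) ^ 12) * exp (-(a * n)) * nrm (ρ w) ^ 2 := by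
  obtain ⟨c₁', K₁', g₁⟩ := good_pad (κ := ι₂) ℓ₁ R₁ f₁ v₁ a₁ c₁ K₁ h₁
  obtain ⟨c₂', K₂', g₂⟩ := good_pad (κ := ι₁) ℓ₂ R₂ f₂ v₂ a₂ c₂ K₂ h₂
  replace g₂ := good_repSub ℓ₂ _ _ _ _ _ _ g₂ (Equiv.sumComm ι₁ ι₂)
  have ha : 0 < min a₁ a₂ := lt_min h₁.1 h₂.1
  replace g₁ := good_mono ℓ₁ _ _ _ _ (min a₁ a₂) _ _ g₁ ha (min_le_left _ _)
  replace g₂ := good_mono ℓ₂ _ _ _ _ (min a₁ a₂) _ _ g₂ ha (min_le_right _ _)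
  set a := min a₁ a₂ with haa
  set N : ℝ := (Fintype.card ((ι₁ ⊕ ι₂) ⊕ Bool) : ℝ) with hN
  have hN1 : 1 ≤ N := by
    have : Nonempty ((ι₁ ⊕ ι₂) ⊕ Bool) := ⟨Sum.inr true⟩
    rw [hN]
    exact_mod_cast Fintype.card_pos
  set η : ℝ := 1 / (4 * N ^ 12) with hη
  have hη0 : 0 < η := by positivity
  have hη1 : η ≤ 1 / 4 := by
    rw [hη]
    have : 1 ≤ N ^ 12 := one_le_pow₀ hN1
    gcongr
    linarith
  set δ : ℝ := 1 / (2 * N) with hδ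
  have hδ0 : 0 < δ := by positivity
  have hδ1 : N * δ ≤ 1 / 2 := by
    rw [hδ]
    apply le_of_eq
    field_simp
  obtain ⟨M₁, hM₁⟩ := pp_exists ℓ₁ _ _ _ _ _ _ g₁ true δ η hδ0 hη0
  obtain ⟨M₂, hM₂⟩ := pp_exists ℓ₂ _ _ _ _ _ _ g₂ false δ η hδ0 hη0
  refine ⟨Monoid.Coprod.lift M₁ M₂, a, ha, fun w hw => ?_⟩
  obtain ⟨b, n, hA⟩ := (alt_exhaust ℓ₁ ℓ₂ w).resolve_left hw
  refine ⟨b, n, hA, ?_⟩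
  obtain ⟨j0, q, hq, -, h3, h4⟩ := alt_estimate (Syl ℓ₁ ℓ₂) (Monoid.Coprod.lift M₁ M₂) a δ η hδ0 hδ1
    hη0 hη1 (by
      rintro b n x (⟨rfl, g, hg, rfl, rfl⟩ | ⟨rfl, g, hg, rfl, rfl⟩)
      · rw [Monoid.Coprod.lift_apply_inl]; exact hM₁ g hg
      · rw [Monoid.Coprod.lift_apply_inr]; exact hM₂ g hg) hA
  refine h4.trans ?_
  have := h3.trans (abs_le_nrm _ _ _)
  gcongr

end FPA

/-- **Douba–Tsouvalas, Danciger–Guéritaud–Kassel**: a free product of Anosov groups is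
isomorphic to an Anosov group. If `Γᵢ ≤ SL(dᵢ, ℝ)` is finitely generated and `P_{θᵢ}`-Anosov
(`i = 1, 2`), then there is `d` and an injective homomorphism `ρ : Γ₁ * Γ₂ → SL(d, ℝ)`
whose image is `P_{1,d-1}`-Anosov. -/
theorem free_product_of_anosov_is_anosov
    (d₁ d₂ : ℕ)
    (Γ₁ : Subgroup (Matrix.SpecialLinearGroup (Fin d₁) ℝ))
    (Γ₂ : Subgroup (Matrix.SpecialLinearGroup (Fin d₂) ℝ))
    (S₁ : Finset (Matrix.SpecialLinearGroup (Fin d₁) ℝ))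
    (S₂ : Finset (Matrix.SpecialLinearGroup (Fin d₂) ℝ))
    (hS₁ : Subgroup.closure (S₁ : Set (Matrix.SpecialLinearGroup (Fin d₁) ℝ)) = Γ₁)
    (hS₂ : Subgroup.closure (S₂ : Set (Matrix.SpecialLinearGroup (Fin d₂) ℝ)) = Γ₂)
    (θ₁ θ₂ : Finset ℕ) (hθ₁ : θ₁.Nonempty) (hθ₂ : θ₂.Nonempty)
    (hθ₁' : ∀ k ∈ θ₁, 1 ≤ k ∧ k ≤ d₁ - 1) (hθ₂' : ∀ k ∈ θ₂, 1 ≤ k ∧ k ≤ d₂ - 1)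
    (a C : ℝ) (ha : 0 < a) (hC : 0 < C)
    (hAnosov₁ : ∀ γ ∈ Γ₁, ∀ k ∈ θ₁,
      a * (wordLength (S₁ : Set _) γ) - C ≤
        Real.log (sval (γ : Matrix (Fin d₁) (Fin d₁) ℝ) k) -
          Real.log (sval (γ : Matrix (Fin d₁) (Fin d₁) ℝ) (k + 1)))
    (hAnosov₂ : ∀ γ ∈ Γ₂, ∀ k ∈ θ₂,
      a * (wordLength (S₂ : Set _) γ) - C ≤
        Real.log (sval (γ : Matrix (Fin d₂) (Fin d₂) ℝ) k) -
          Real.log (sval (γ : Matrix (Fin d₂) (Fin d₂) ℝ) (k + 1))) :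
    ∃ (d : ℕ) (ρ : Monoid.Coprod Γ₁ Γ₂ →* Matrix.SpecialLinearGroup (Fin d) ℝ),
      Function.Injective ρ ∧
      ∃ (T : Finset (Monoid.Coprod Γ₁ Γ₂)),
        Subgroup.closure (T : Set (Monoid.Coprod Γ₁ Γ₂)) = ⊤ ∧
        ∃ a' C' : ℝ, 0 < a' ∧ 0 < C' ∧
          ∀ w : Monoid.Coprod Γ₁ Γ₂,
            (a' * (wordLength (T : Set _) w) - C' ≤
              Real.log (sval ((ρ w : Matrix (Fin d) (Fin d) ℝ)) 1) -
                Real.log (sval ((ρ w : Matrix (Fin d) (Fin d) ℝ)) 2)) ∧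
            (a' * (wordLength (T : Set _) w) - C' ≤
              Real.log (sval ((ρ w : Matrix (Fin d) (Fin d) ℝ)) (d - 1)) -
                Real.log (sval ((ρ w : Matrix (Fin d) (Fin d) ℝ)) d)) := by
  classical
  set TT : Set (Monoid.Coprod Γ₁ Γ₂) :=
    (Monoid.Coprod.inl : Γ₁ →* Monoid.Coprod Γ₁ Γ₂) ''
        ((Subtype.val : Γ₁ → Matrix.SpecialLinearGroup (Fin d₁) ℝ) ⁻¹' (S₁ : Set _)) ∪
      (Monoid.Coprod.inr : Γ₂ →* Monoid.Coprod Γ₁ Γ₂) ''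
        ((Subtype.val : Γ₂ → Matrix.SpecialLinearGroup (Fin d₂) ℝ) ⁻¹' (S₂ : Set _)) with hTT
  have hfin : TT.Finite :=
    ((S₁.finite_toSet.preimage Subtype.val_injective.injOn).image _).union
      ((S₂.finite_toSet.preimage Subtype.val_injective.injOn).image _)
  have hl : ∀ g : Γ₁, (g : Matrix.SpecialLinearGroup (Fin d₁) ℝ) ∈ (S₁ : Set _) →
      (Monoid.Coprod.inl : Γ₁ →* Monoid.Coprod Γ₁ Γ₂) g ∈ TT := fun g hg => Or.inl ⟨g, hg, rfl⟩
  have hr : ∀ g : Γ₂, (g : Matrix.SpecialLinearGroup (Fin d₂) ℝ) ∈ (S₂ : Set _) →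
      (Monoid.Coprod.inr : Γ₂ →* Monoid.Coprod Γ₁ Γ₂) g ∈ TT := fun g hg => Or.inr ⟨g, hg, rfl⟩
  have hmem : ∀ w : Monoid.Coprod Γ₁ Γ₂, w ∈ Subgroup.closure TT := by
    intro w
    induction w using Monoid.Coprod.induction_on with
    | inl m => exact FPA.mem_closure_hom Γ₁ _ TT hS₁ _ hl m
    | inr m => exact FPA.mem_closure_hom Γ₂ _ TT hS₂ _ hr m
    | mul x y hx hy => exact mul_mem hx hy
  obtain ⟨ι₁, i1, i2, R₁, f₁, v₁, a₁, c₁, K₁, g₁⟩ :=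
    FPA.group_good Γ₁ S₁ hS₁ θ₁ hθ₁ hθ₁' a C ha hAnosov₁
  obtain ⟨ι₂, j1, j2, R₂, f₂, v₂, a₂, c₂, K₂, g₂⟩ :=
    FPA.group_good Γ₂ S₂ hS₂ θ₂ hθ₂ hθ₂' a C ha hAnosov₂
  obtain ⟨ρ, a', ha', H⟩ := FPA.coprod_rep _ _ R₁ f₁ v₁ a₁ c₁ K₁ g₁ R₂ f₂ v₂ a₂ c₂ K₂ g₂
  have hsyl : ∀ b n w, FPA.Syl
      (fun γ : Γ₁ => wordLength (S₁ : Set _) (γ : Matrix.SpecialLinearGroup (Fin d₁) ℝ))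
      (fun γ : Γ₂ => wordLength (S₂ : Set _) (γ : Matrix.SpecialLinearGroup (Fin d₂) ℝ)) b n w →
      wordLength TT w ≤ n := by
    rintro b n w (⟨-, g, -, rfl, rfl⟩ | ⟨-, g, -, rfl, rfl⟩)
    · exact FPA.wl_hom_le Γ₁ _ TT hS₁ _ hl g
    · exact FPA.wl_hom_le Γ₂ _ TT hS₂ _ hr g
  have halt : ∀ b n w, FPA.Alt (FPA.Syl
      (fun γ : Γ₁ => wordLength (S₁ : Set _) (γ : Matrix.SpecialLinearGroup (Fin d₁) ℝ))
      (fun γ : Γ₂ => wordLength (S₂ : Set _) (γ : Matrix.SpecialLinearGroup (Fin d₂) ℝ))) b n w →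
      wordLength TT w ≤ n := by
    intro b n w h
    induction h with
    | single h => exact hsyl _ _ _ h
    | cons h _ ih =>
      exact (FPA.wl_mul_le TT _ _ (hmem _) (hmem _)).trans (Nat.add_le_add (hsyl _ _ _ h) ih)
  obtain ⟨d, r, hinj, C', hC', hfinal⟩ := FPA.final_step ρ
    (by simp only [Fintype.card_sum, Fintype.card_bool]; omega)
    (wordLength TT) (FPA.wl_one TT) (fun w => FPA.wl_inv TT w (hmem w)) a' ha' (by
      intro w hw
      obtain ⟨b, n, hA, hb⟩ := H w hw
      refine hb.trans ?_
      have hn : (wordLength TT w : ℝ) ≤ n := by exact_mod_cast halt b n w hA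
      gcongr)
  refine ⟨d, r, hinj, hfin.toFinset, ?_, a', C', ha', hC', ?_⟩
  · rw [Set.Finite.coe_toFinset]
    exact (Subgroup.eq_top_iff' _).mpr hmem
  · rw [Set.Finite.coe_toFinset]
    exact hfinal
end

section
/- Let Γ be a subgroup of SL(d,ℝ) generated by a finite set S and suppose Γ is P_k-Anosov for some 1 ≤ k ≤ d−1: there exist a, C > 0 such that log σ_k(γ) − log σ_{k+1}(γ) ≥ a·|γ| − C for all γ ∈ Γ, where |γ| is word length with respect to S. Then the orbit map is a quasi-isometric embedding: there exist constants L ≥ 1 and C' ≥ 0 such that (1/L)·|γ| − C' ≤ ‖κ(γ)‖ ≤ L·|γ| + C' for all γ ∈ Γ, where ‖κ(γ)‖ denotes the Euclidean norm of the Cartan projection κ(γ) = (log σ₁(γ), …, log σ_d(γ)). -/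
open Matrix

/-- The Euclidean norm of the Cartan projection `κ(A) = (log σ₁(A), …, log σ_d(A))`. -/
noncomputable def cartanNorm {d : ℕ} (A : Matrix (Fin d) (Fin d) ℝ) : ℝ :=
  Real.sqrt (∑ k ∈ Finset.Icc 1 d, (Real.log (sval A k)) ^ 2)

/-- Euclidean operator norm. -/
noncomputable def opN {d : ℕ} (A : Matrix (Fin d) (Fin d) ℝ) : ℝ :=
  ‖Matrix.toEuclideanCLM (n := Fin d) (𝕜 := ℝ) A‖

lemma opN_nonneg {d : ℕ} (A : Matrix (Fin d) (Fin d) ℝ) : 0 ≤ opN A := norm_nonneg _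

lemma opN_mul {d : ℕ} (A B : Matrix (Fin d) (Fin d) ℝ) : opN (A * B) ≤ opN A * opN B := by
  unfold opN
  rw [map_mul]
  exact norm_mul_le _ _

lemma opN_one {d : ℕ} : opN (1 : Matrix (Fin d) (Fin d) ℝ) ≤ 1 := by
  unfold opN
  rw [map_one]
  exact ContinuousLinearMap.norm_id_le

/-- A square root of an eigenvalue of `AᴴA` is the norm of the image of a unit vector. -/
lemma sqrt_eig {d : ℕ} (A : Matrix (Fin d) (Fin d) ℝ) (i : Fin d) :
    ∃ v : EuclideanSpace ℝ (Fin d), ‖v‖ = 1 ∧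
      ‖Matrix.toEuclideanCLM (n := Fin d) (𝕜 := ℝ) A v‖ =
      Real.sqrt ((Matrix.isHermitian_conjTranspose_mul_self A).eigenvalues i) := by
  set hA := Matrix.isHermitian_conjTranspose_mul_self A
  refine ⟨hA.eigenvectorBasis i, hA.eigenvectorBasis.orthonormal.1 i, ?_⟩
  rw [← Real.sqrt_sq (norm_nonneg _)]
  congr 1
  set v := hA.eigenvectorBasis i with hv
  have h1 : ‖v‖ = 1 := hA.eigenvectorBasis.orthonormal.1 i
  have h2 := hA.mulVec_eigenvectorBasis i
  rw [← hv] at h2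
  have h3 : (v.ofLp) ⬝ᵥ (v.ofLp) = 1 := by
    have := EuclideanSpace.real_norm_sq_eq v
    rw [h1] at this
    simp only [dotProduct]
    rw [one_pow] at this
    rw [this]
    exact Finset.sum_congr rfl fun _ _ => by ring
  rw [EuclideanSpace.real_norm_sq_eq]
  have h4 : ∑ j, (Matrix.toEuclideanCLM (n := Fin d) (𝕜 := ℝ) A v) j ^ 2
      = (A *ᵥ v.ofLp) ⬝ᵥ (A *ᵥ v.ofLp) := by
    simp only [dotProduct]
    refine Finset.sum_congr rfl fun j _ => ?_
    rw [sq]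
    rfl
  rw [h4, Matrix.dotProduct_mulVec, ← Matrix.mulVec_transpose, Matrix.mulVec_mulVec,
    ← Matrix.conjTranspose_eq_transpose_of_trivial, h2, smul_dotProduct, h3]
  simp

lemma log_bound {d : ℕ} (A B : Matrix (Fin d) (Fin d) ℝ) (hBA : B * A = 1) (R : ℝ) (hR : 1 ≤ R)
    (hA : opN A ≤ R) (hB : opN B ≤ R) (k : ℕ) : |Real.log (sval A k)| ≤ Real.log R := by
  unfold sval
  split_ifs with h
  · dsimp only
    obtain ⟨v, hv, hs⟩ := sqrt_eig A ((Tuple.sort fun i =>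
      Real.sqrt ((Matrix.isHermitian_conjTranspose_mul_self A).eigenvalues i))
        (Fin.rev ⟨k - 1, by omega⟩))
    rw [← hs]
    set w := Matrix.toEuclideanCLM (n := Fin d) (𝕜 := ℝ) A v with hw
    have hwv : Matrix.toEuclideanCLM (n := Fin d) (𝕜 := ℝ) B w = v := by
      rw [hw, ← ContinuousLinearMap.mul_apply, ← map_mul, hBA, map_one]
      rfl
    have u1 : ‖w‖ ≤ R := by
      have := (Matrix.toEuclideanCLM (n := Fin d) (𝕜 := ℝ) A).le_opNorm v
      rw [hv, mul_one] at this
      exact this.trans hA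
    have u2 : 1 ≤ R * ‖w‖ := by
      have := (Matrix.toEuclideanCLM (n := Fin d) (𝕜 := ℝ) B).le_opNorm w
      rw [hwv, hv] at this
      exact this.trans (mul_le_mul_of_nonneg_right hB (norm_nonneg _))
    have u3 : 0 < ‖w‖ := by
      rcases (norm_nonneg w).eq_or_lt with h0 | h0
      · rw [← h0] at u2
        norm_num at u2
      · exact h0
    have u4 := Real.log_nonneg u2
    rw [Real.log_mul (by positivity) u3.ne'] at u4
    rw [abs_le]
    exact ⟨by linarith, Real.log_le_log u3 u1⟩
  · simpa using Real.log_nonneg hR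

lemma prod_bound {d : ℕ} (M : ℝ) (hM : 1 ≤ M) (w : List (Matrix.SpecialLinearGroup (Fin d) ℝ))
    (hw : ∀ g ∈ w, opN (g : Matrix (Fin d) (Fin d) ℝ) ≤ M ∧
      opN ((g⁻¹ : Matrix.SpecialLinearGroup (Fin d) ℝ) : Matrix (Fin d) (Fin d) ℝ) ≤ M) :
    opN (w.prod : Matrix (Fin d) (Fin d) ℝ) ≤ M ^ w.length ∧
      opN ((w.prod⁻¹ : Matrix.SpecialLinearGroup (Fin d) ℝ) : Matrix (Fin d) (Fin d) ℝ)
        ≤ M ^ w.length := by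
  induction w with
  | nil =>
    simp only [List.prod_nil, List.length_nil, pow_zero, inv_one, Matrix.SpecialLinearGroup.coe_one]
    exact ⟨opN_one, opN_one⟩
  | cons g w ih =>
    obtain ⟨i1, i2⟩ := ih fun x hx => hw x (List.mem_cons_of_mem _ hx)
    obtain ⟨g1, g2⟩ := hw g List.mem_cons_self
    rw [List.prod_cons, _root_.mul_inv_rev, List.length_cons, Matrix.SpecialLinearGroup.coe_mul,
      Matrix.SpecialLinearGroup.coe_mul]
    constructor
    · rw [pow_succ']
      exact (opN_mul _ _).trans (mul_le_mul g1 i1 (opN_nonneg _) (by positivity))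
    · rw [pow_succ]
      exact (opN_mul _ _).trans (mul_le_mul i2 g2 (opN_nonneg _) (by positivity))

lemma abs_log_le_cartanNorm {d : ℕ} (A : Matrix (Fin d) (Fin d) ℝ) (k : ℕ) (h1 : 1 ≤ k)
    (h2 : k ≤ d) : |Real.log (sval A k)| ≤ cartanNorm A := by
  unfold cartanNorm
  apply Real.abs_le_sqrt
  exact Finset.single_le_sum (f := fun k => (Real.log (sval A k)) ^ 2)
    (fun _ _ => sq_nonneg _) (Finset.mem_Icc.2 ⟨h1, h2⟩)

lemma cartanNorm_le {d : ℕ} (A : Matrix (Fin d) (Fin d) ℝ) (r : ℝ)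
    (h : ∀ k, |Real.log (sval A k)| ≤ r) : cartanNorm A ≤ d * r := by
  have hr : 0 ≤ r := (abs_nonneg _).trans (h 0)
  unfold cartanNorm
  apply Real.sqrt_le_iff.2 ⟨by positivity, ?_⟩
  calc ∑ k ∈ Finset.Icc 1 d, (Real.log (sval A k)) ^ 2 ≤ ∑ k ∈ Finset.Icc 1 d, r ^ 2 :=
        Finset.sum_le_sum fun k _ => sq_le_sq' (abs_le.1 (h k)).1 (abs_le.1 (h k)).2
    _ = d * r ^ 2 := by simp
    _ ≤ (d * r) ^ 2 := by
      rw [mul_pow]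
      refine mul_le_mul_of_nonneg_right ?_ (sq_nonneg r)
      exact_mod_cast Nat.le_self_pow two_ne_zero d

/-- If `Γ ≤ SL(d, ℝ)` is generated by a finite set `S` and is `P_k`-Anosov for some
`1 ≤ k ≤ d-1`, then the orbit map into the symmetric space is a quasi-isometric embedding:
there exist `L ≥ 1` and `C' ≥ 0` with
`(1/L)·|γ| - C' ≤ ‖κ(γ)‖ ≤ L·|γ| + C'` for all `γ ∈ Γ`. -/
theorem anosov_orbit_map_qi_embedding (d k : ℕ) (hk : 1 ≤ k) (hk' : k ≤ d - 1)
    (Γ : Subgroup (Matrix.SpecialLinearGroup (Fin d) ℝ))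
    (S : Finset (Matrix.SpecialLinearGroup (Fin d) ℝ))
    (hS : Subgroup.closure (S : Set (Matrix.SpecialLinearGroup (Fin d) ℝ)) = Γ)
    (a C : ℝ) (ha : 0 < a) (hC : 0 < C)
    (hAnosov : ∀ γ ∈ Γ,
      a * (wordLength (S : Set _) γ) - C ≤
        Real.log (sval (γ : Matrix (Fin d) (Fin d) ℝ) k) -
          Real.log (sval (γ : Matrix (Fin d) (Fin d) ℝ) (k + 1))) :
    ∃ L C' : ℝ, 1 ≤ L ∧ 0 ≤ C' ∧
      ∀ γ ∈ Γ,
        (1 / L) * (wordLength (S : Set _) γ) - C' ≤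
            cartanNorm (γ : Matrix (Fin d) (Fin d) ℝ) ∧
          cartanNorm (γ : Matrix (Fin d) (Fin d) ℝ) ≤
            L * (wordLength (S : Set _) γ) + C' := by
  set M : ℝ := 1 + ∑ s ∈ S, (opN (s : Matrix (Fin d) (Fin d) ℝ) +
    opN ((s⁻¹ : Matrix.SpecialLinearGroup (Fin d) ℝ) : Matrix (Fin d) (Fin d) ℝ)) with hMdef
  have hM : 1 ≤ M := by
    have : 0 ≤ ∑ s ∈ S, (opN (s : Matrix (Fin d) (Fin d) ℝ) +
      opN ((s⁻¹ : Matrix.SpecialLinearGroup (Fin d) ℝ) : Matrix (Fin d) (Fin d) ℝ)) :=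
      Finset.sum_nonneg fun s _ => add_nonneg (opN_nonneg _) (opN_nonneg _)
    linarith
  have hSM : ∀ s ∈ S, opN (s : Matrix (Fin d) (Fin d) ℝ) ≤ M ∧
      opN ((s⁻¹ : Matrix.SpecialLinearGroup (Fin d) ℝ) : Matrix (Fin d) (Fin d) ℝ) ≤ M := by
    intro s hs
    have := Finset.single_le_sum (f := fun s : Matrix.SpecialLinearGroup (Fin d) ℝ =>
      opN (s : Matrix (Fin d) (Fin d) ℝ) +
      opN ((s⁻¹ : Matrix.SpecialLinearGroup (Fin d) ℝ) : Matrix (Fin d) (Fin d) ℝ))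
      (fun s _ => add_nonneg (opN_nonneg _) (opN_nonneg _)) hs
    beta_reduce at this
    have p1 := opN_nonneg (s : Matrix (Fin d) (Fin d) ℝ)
    have p2 := opN_nonneg
      ((s⁻¹ : Matrix.SpecialLinearGroup (Fin d) ℝ) : Matrix (Fin d) (Fin d) ℝ)
    constructor <;> linarith
  have hlogM := Real.log_nonneg hM
  set L : ℝ := 1 + 2 / a + d * Real.log M with hL
  have ha2 : 0 < 2 / a := by positivity
  have hdl : 0 ≤ d * Real.log M := by positivity
  have hL1 : 1 ≤ L := by linarith
  refine ⟨L, C / 2, hL1, by positivity, fun γ hγ => ⟨?_, ?_⟩⟩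
  · have h0 := hAnosov γ hγ
    have h1 := abs_le.1 (abs_log_le_cartanNorm (γ : Matrix (Fin d) (Fin d) ℝ) k hk (by omega))
    have h2 := abs_le.1
      (abs_log_le_cartanNorm (γ : Matrix (Fin d) (Fin d) ℝ) (k + 1) (by omega) (by omega))
    have h3 : 1 / L ≤ a / 2 := by
      rw [div_le_div_iff₀ (by linarith) two_pos]
      have : a * (2 / a) = 2 := by field_simp
      nlinarith
    have h4 : (1 / L) * (wordLength (S : Set _) γ : ℝ) ≤ a / 2 * (wordLength (S : Set _) γ : ℝ) :=
      mul_le_mul_of_nonneg_right h3 (Nat.cast_nonneg _)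
    linarith [h1.2, h2.1]
  · have hne : {n | ∃ w : List (Matrix.SpecialLinearGroup (Fin d) ℝ), w.length = n ∧
        (∀ g ∈ w, g ∈ (S : Set (Matrix.SpecialLinearGroup (Fin d) ℝ)) ∨
          g⁻¹ ∈ (S : Set (Matrix.SpecialLinearGroup (Fin d) ℝ))) ∧ w.prod = γ}.Nonempty := by
      rw [← hS] at hγ
      rw [← Subgroup.mem_toSubmonoid, Subgroup.closure_toSubmonoid] at hγ
      obtain ⟨w, hw, hp⟩ := Submonoid.exists_list_of_mem_closure hγ
      exact ⟨w.length, w, rfl, fun g hg => (hw g hg).imp id fun h => Set.mem_inv.1 h, hp⟩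
    obtain ⟨w, hlen, hw, hp⟩ := Nat.sInf_mem hne
    change w.length = wordLength (S : Set _) γ at hlen
    have hb := prod_bound M hM w fun g hg => by
      rcases hw g hg with h | h
      · exact hSM g h
      · have := hSM _ h
        rw [inv_inv] at this
        exact this.symm
    rw [hp, hlen] at hb
    have hc := cartanNorm_le (γ : Matrix (Fin d) (Fin d) ℝ) _ fun k =>
      log_bound (γ : Matrix (Fin d) (Fin d) ℝ)
        ((γ⁻¹ : Matrix.SpecialLinearGroup (Fin d) ℝ) : Matrix (Fin d) (Fin d) ℝ)
        (by rw [← Matrix.SpecialLinearGroup.coe_mul, inv_mul_cancel,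
          Matrix.SpecialLinearGroup.coe_one])
        _ (one_le_pow₀ hM) hb.1 hb.2 k
    rw [Real.log_pow] at hc
    have h5 : (d * Real.log M) * (wordLength (S : Set _) γ : ℝ) ≤
        L * (wordLength (S : Set _) γ : ℝ) :=
      mul_le_mul_of_nonneg_right (by linarith) (Nat.cast_nonneg _)
    linarith
end
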